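/- arXiv:2402.05836 — 10 statements merged into one kernel-verified Lean document; each statement's English description precedes it below -/
import Mathlib

section
/- Let k be a field of characteristic p > 0 and let F be a finitely generated field extension of k. Let E = kF^p be the subfield of F generated by k together with the p-th powers of elements of F. Then there exists e ∈ ℕ such that [F : E] = p^e and the module of Kähler differentials Ω¹_{F/k} is a free F-module of rank e; equivalently, for every F-module C the evaluation map at a p-basis gives an F-linear isomorphism Der_k(F, C) ≅ C^e. -/
/-!
The universal derivation `d : F → Ω[F⁄k]` vanishes on `E = k F^p`, since
`d (y ^ p) = p y ^ (p - 1) d y = 0`. As the elements `d x` span the finite-dimensional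
`F`-vector space `Ω[F⁄k]`, there are `a₁, …, aₑ` in `F` with `d a₁, …, d aₑ` an `F`-basis. This
family is a `p`-basis of `F` over `E`:

* it generates `F` over `E`: put `K = E(a₁, …, aₑ)`. Then `Ω[F⁄K]` is a quotient of `Ω[F⁄k]` in
  which every `d aᵢ` dies, so it is zero and `F / K` is formally unramified. It is also purely
  inseparable because `F^p ⊆ K`, so `F = K` (`eq_top_of_span_D_eq_top`);
* no `aᵢ` lies in the field generated over `E` by the others: the elements `x` with `d x` in a fixed
  subspace form a subfield, so otherwise `d aᵢ` would be a combination of the other `d aⱼ`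
  (`D_mem_span_of_mem_adjoin`).

Adjoining the `aᵢ` one at a time therefore multiplies the degree by exactly `p` at each step, as
`X ^ p - c` is irreducible when `c` is not a `p`-th power. Hence `[F : E] = p ^ e`, and the
statement on derivations is the universal property `Der_k(F, C) ≃ Hom_F(Ω[F⁄k], C)`.
-/

universe u v

open IntermediateField in
/-- On the field generated over `k F^p` by a set `T`, the universal derivation takes values in the
span of `d T`. -/
theorem D_mem_span_of_mem_adjoin {p : ℕ} {k : Type u} {F : Type v} [Field k] [Field F]
    [Algebra k F] [CharP F p] {T : Set F} {x : F}
    (hx : x ∈ adjoin k ({x : F | ∃ y : F, y ^ p = x} ∪ T)) :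
    KaehlerDifferential.D k F x ∈ Submodule.span F (KaehlerDifferential.D k F '' T) := by
  induction hx using adjoin_induction with
  | mem x hx =>
    rcases hx with ⟨y, rfl⟩ | hx
    · rw [Derivation.leibniz_pow, ← Nat.cast_smul_eq_nsmul F, CharP.cast_eq_zero, zero_smul]
      exact zero_mem _
    · exact Submodule.subset_span ⟨x, hx, rfl⟩
  | algebraMap x => simp
  | add x y _ _ hx hy => rw [map_add]; exact add_mem hx hy
  | inv x _ hx => rw [Derivation.leibniz_inv]; exact Submodule.smul_mem _ _ hx
  | mul x y _ _ hx hy =>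
    rw [Derivation.leibniz]
    exact add_mem (Submodule.smul_mem _ _ hy) (Submodule.smul_mem _ _ hx)

/-- An intermediate field `K` containing `F^p` and elements whose differentials span `Ω[F⁄k]` is
all of `F`, since `F / K` is both formally unramified and purely inseparable. -/
theorem eq_top_of_span_D_eq_top {p : ℕ} (hp : p.Prime) {k : Type u} {F : Type v} [Field k]
    [Field F] [Algebra k F] [CharP F p] [Algebra.EssFiniteType k F] (K : IntermediateField k F)
    (hK : ∀ y : F, y ^ p ∈ K) {T : Set F} (hT : T ⊆ K)
    (hspan : Submodule.span F (KaehlerDifferential.D k F '' T) = ⊤) : K = ⊤ := by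
  have : Fact p.Prime := ⟨hp⟩
  have : ExpChar F p := .prime hp
  have : CharP K p := (RingHom.charP_iff (algebraMap K F) (algebraMap K F).injective p).2 ‹_›
  have : ExpChar K p := .prime hp
  have : Algebra.EssFiniteType K F := .of_comp k K F
  have : IsPurelyInseparable K F :=
    (isPurelyInseparable_iff_pow_mem K p).2 fun x ↦ ⟨1, ⟨x ^ p, hK x⟩, by simp⟩
  have hmap : KaehlerDifferential.map k K F F = 0 := by
    apply LinearMap.ext_on hspan
    rintro _ ⟨x, hx, rfl⟩
    rw [KaehlerDifferential.map_D]
    exact (KaehlerDifferential.D K F).map_algebraMap ⟨x, hT hx⟩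
  have : Algebra.FormallyUnramified K F := by
    refine ⟨(subsingleton_iff_forall_eq 0).2 fun w ↦ ?_⟩
    obtain ⟨v, rfl⟩ := KaehlerDifferential.map_surjective k K F w
    rw [hmap, LinearMap.zero_apply]
  have hr := Algebra.FormallyUnramified.range_eq_top_of_isPurelyInseparable K F
  refine top_le_iff.1 fun x _ ↦ ?_
  obtain ⟨y, rfl⟩ : x ∈ (algebraMap K F).range := hr ▸ trivial
  exact y.2

open Polynomial in
theorem finrank_adjoin_simple_of_pow_mem {p : ℕ} (hp : p.Prime) {K F : Type*} [Field K] [Field F]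
    [Algebra K F] [CharP F p] {a : F} {c : K} (hc : a ^ p = algebraMap K F c)
    (ha : a ∉ (algebraMap K F).range) :
    Module.finrank K (IntermediateField.adjoin K {a}) = p := by
  have : Fact p.Prime := ⟨hp⟩
  have hirr : Irreducible (X ^ p - C c : K[X]) := by
    refine X_pow_sub_C_irreducible_of_prime hp fun b hb ↦ ha ⟨b, ?_⟩
    apply frobenius_inj F p
    rw [frobenius_def, frobenius_def, ← map_pow, hb, hc]
  have hmonic : (X ^ p - C c : K[X]).Monic := monic_X_pow_sub_C c hp.ne_zero
  have hroot : aeval a (X ^ p - C c : K[X]) = 0 := by simp [hc]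
  rw [IntermediateField.adjoin.finrank ⟨_, hmonic, hroot⟩,
    ← minpoly.eq_of_irreducible_of_monic hirr hroot hmonic, natDegree_X_pow_sub_C]

open IntermediateField in
/-- Each element of a family with independent differentials contributes a factor `p` to the degree
over `k F^p`. -/
theorem relfinrank_adjoin_image {p : ℕ} (hp : p.Prime) {k : Type u} {F : Type v} [Field k]
    [Field F] [Algebra k F] [CharP F p] {κ : Type*} {a : κ → F}
    (ha : LinearIndependent F (KaehlerDifferential.D k F ∘ a)) (s : Finset κ) :
    relfinrank (adjoin k {x : F | ∃ y : F, y ^ p = x})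
      (adjoin k ({x : F | ∃ y : F, y ^ p = x} ∪ a '' s)) = p ^ s.card := by
  classical
  induction s using Finset.induction_on with
  | empty => simp
  | insert i s hi ih =>
    set P : Set F := {x : F | ∃ y : F, y ^ p = x} with hP
    have hle : adjoin k (P ∪ a '' s) ≤ adjoin k (P ∪ a '' (insert i s : Finset κ)) :=
      adjoin.mono _ _ _ <| Set.union_subset_union_right _ <| Set.image_mono <| by simp
    have hi' : a i ∉ adjoin k (P ∪ a '' s) := fun h ↦ by
      have h := D_mem_span_of_mem_adjoin h
      rw [← Set.image_comp] at h
      exact ha.notMem_span_image (by simpa using hi) h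
    have hpow : a i ^ p ∈ adjoin k (P ∪ a '' s) := subset_adjoin _ _ (.inl ⟨a i, rfl⟩)
    have hext : extendScalars hle = adjoin (adjoin k (P ∪ a '' s)) {a i} := by
      apply restrictScalars_injective k
      rw [extendScalars_restrictScalars, adjoin_adjoin_left, Finset.coe_insert,
        Set.image_insert_eq, Set.union_assoc, Set.union_singleton]
    rw [← relfinrank_mul_relfinrank (adjoin.mono _ _ _ Set.subset_union_left) hle, ih,
      relfinrank_eq_finrank_of_le hle, hext,
      finrank_adjoin_simple_of_pow_mem hp (c := ⟨a i ^ p, hpow⟩) rfl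
        (by rintro ⟨y, hy⟩; exact hi' (hy ▸ y.2)),
      Finset.card_insert_of_notMem hi, pow_succ]

/-- Let `k` be a field of characteristic `p > 0`, `F` a finitely generated
field extension of `k`, and `E = k F^p` the subfield of `F` generated by `k` together with the
`p`-th powers of elements of `F`.  Then there exists `e : ℕ` with `[F : E] = p ^ e` such that
`Ω¹_{F/k}` is a free `F`-module of rank `e`; equivalently, for every `F`-module `C` we have
`Der_k(F, C) ≃ₗ[F] C ^ e`. -/
theorem kaehler_rank_of_char_p
    (p : ℕ) (k : Type u) (F : Type v) [Field k] [Field F] [Algebra k F]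
    [CharP k p] (hp : p ≠ 0)
    (hfg : (⊤ : IntermediateField k F).FG) :
    ∃ e : ℕ,
      Module.finrank
        (IntermediateField.adjoin k {x : F | ∃ y : F, y ^ p = x}) F = p ^ e ∧
      Module.Free F (KaehlerDifferential k F) ∧
      Module.finrank F (KaehlerDifferential k F) = e ∧
      ∀ (C : Type v) [AddCommGroup C] [Module k C] [Module F C] [IsScalarTower k F C],
        Nonempty ((Derivation k F C) ≃ₗ[F] (Fin e → C)) := by
  have hprime : p.Prime := (CharP.char_is_prime_or_zero k p).resolve_right hp
  have : CharP F p := charP_of_injective_algebraMap (algebraMap k F).injective p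
  have : Algebra.EssFiniteType k F := IntermediateField.fg_top_iff.1 hfg
  obtain ⟨κ, a, -, hspan, hli⟩ := exists_linearIndependent' F (KaehlerDifferential.D k F)
  rw [KaehlerDifferential.span_range_derivation] at hspan
  have : Finite κ := hli.finite
  have := Fintype.ofFinite κ
  let b := Module.Basis.mk hli hspan.ge
  have htop : IntermediateField.adjoin k
      ({x : F | ∃ y : F, y ^ p = x} ∪ a '' (Finset.univ : Finset κ)) = ⊤ := by
    refine eq_top_of_span_D_eq_top hprime _
      (fun y ↦ IntermediateField.subset_adjoin _ _ (.inl ⟨y, rfl⟩))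
      (T := Set.range a) ?_ (by rw [← Set.range_comp, hspan])
    rintro _ ⟨i, rfl⟩
    exact IntermediateField.subset_adjoin _ _ (.inr ⟨i, by simp, rfl⟩)
  have hdeg := relfinrank_adjoin_image hprime hli Finset.univ
  rw [htop, IntermediateField.relfinrank_top_right] at hdeg
  refine ⟨Fintype.card κ, hdeg, inferInstance, Module.finrank_eq_card_basis b, ?_⟩
  intro C _ _ _ _
  exact ⟨(KaehlerDifferential.linearMapEquivDerivation k F).symm ≪≫ₗ
    ((b.reindex (Fintype.equivFin κ)).constr F).symm⟩
end

section
/- Let k be a field and n ≥ 1. The set of primes of the polynomial ring k[t₁,…,tₙ] that are maximal ideals 𝔪 whose residue field k[t₁,…,tₙ]/𝔪 is a separable (algebraic) extension of k is dense in Spec(k[t₁,…,tₙ]) with respect to the Zariski topology. -/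
/-!
Let `K` be a separable closure of `k`. It is infinite: a finite field is perfect, so a finite `K`
would be algebraically closed, and algebraically closed fields are infinite. A nonempty basic open
set `D(f)` has `f ≠ 0`, so `f` does not vanish at some point `x ∈ Kⁿ`. The kernel of evaluation
at `x` is a prime in `D(f)` whose quotient embeds in `K`; hence the quotient is separable
algebraic over `k`, and, being a domain algebraic over a field, it is a field.
-/

theorem infinite_of_isSepClosed (K : Type*) [Field K] [IsSepClosed K] : Infinite K := by
  by_contra h
  have : Finite K := not_infinite_iff_finite.mp h
  have : IsAlgClosed K := IsSepClosed.isAlgClosed_of_perfectField K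
  exact h IsAlgClosed.instInfinite

/-- For a field `k` and `n ≥ 1`, the set of maximal ideals of
`k[t₁,…,tₙ]` whose residue field is a separable extension of `k` is dense in
`Spec k[t₁,…,tₙ]` for the Zariski topology. -/
theorem dense_separable_maximal_spectrum_mvPolynomial
    (k : Type*) [Field k] (n : ℕ) (hn : 1 ≤ n) :
    Dense {P : PrimeSpectrum (MvPolynomial (Fin n) k) |
      P.asIdeal.IsMaximal ∧
      Algebra.IsSeparable k (MvPolynomial (Fin n) k ⧸ P.asIdeal)} := by
  rw [PrimeSpectrum.isTopologicalBasis_basic_opens.dense_iff]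
  rintro _ ⟨f, rfl⟩ ⟨Q, hQ⟩
  have hf : f ≠ 0 := by
    rintro rfl
    exact hQ Q.asIdeal.zero_mem
  let K := SeparableClosure k
  have : Infinite K := infinite_of_isSepClosed K
  obtain ⟨x, hx⟩ : ∃ x : Fin n → K, MvPolynomial.aeval x f ≠ 0 := by
    by_contra! h
    apply hf
    apply MvPolynomial.map_injective (algebraMap k K) (algebraMap k K).injective
    rw [map_zero]
    refine MvPolynomial.funext fun x => ?_
    rw [MvPolynomial.eval_map, map_zero]
    exact h x
  let φ : MvPolynomial (Fin n) k →ₐ[k] K := MvPolynomial.aeval x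
  have hP : (RingHom.ker φ).IsPrime := RingHom.ker_isPrime φ
  have hsep : Algebra.IsSeparable k (MvPolynomial (Fin n) k ⧸ RingHom.ker φ) :=
    ⟨fun y => by
      have h := Algebra.IsSeparable.isSeparable k (Ideal.kerLiftAlg φ y)
      rwa [IsSeparable, minpoly.algHom_eq _ (Ideal.kerLiftAlg_injective φ)] at h⟩
  refine ⟨⟨RingHom.ker φ, hP⟩, hx, ?_, hsep⟩
  exact Ideal.Quotient.maximal_of_isField _
    (isField_of_isIntegral_of_isField' (Field.toIsField k))
end

section
/- Let k be a field, n ≥ 1, and let F be a finite separable field extension of the rational function field k(t₁,…,tₙ). Let 𝒪_F be the integral closure of k[t₁,…,tₙ] in F. Then the set of primes of 𝒪_F that are maximal ideals 𝔫 whose residue field 𝒪_F/𝔫 is a separable (algebraic) extension of k is dense in Spec(𝒪_F) with respect to the Zariski topology. -/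
/-!
Write `A = k[t₁,…,tₙ]`, `K = Frac A` and `B` for the integral closure of `A` in `F`. Given a
nonzero `b : B`, a maximal ideal of `B` that avoids `b` and has residue field separable over `k`
is needed.

Since `F / K` is separable and `A` is normal and Noetherian, `B` is a finite `A`-module, generated
by some `x₁,…,xᵣ`. Clearing denominators in a Bézout identity for the minimal polynomial of `xᵢ`
over `K` and its derivative gives `f, U, V ∈ A[X]` with `f(xᵢ) = 0` and `U f + V f' = dᵢ` for some
nonzero `dᵢ ∈ A` (`exists_separability_witness`). Also `b` divides some nonzero `c ∈ A`. An infinite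
separable algebraic extension `L / k` contains a point `a ∈ Lⁿ` at which `c d₁ ⋯ dᵣ` does not
vanish. Let `𝔪` be the kernel of evaluation at `a`; it is maximal and `A / 𝔪` embeds into `L`, so it
is separable over `k`. Any prime `P` of `B` over `𝔪` is maximal and avoids `b`; since each `dᵢ` is
a unit modulo `𝔪`, the field `B / P` is generated over `A / 𝔪` by roots of separable polynomials.
Transitivity of separability finishes the proof.
-/

open Polynomial

universe u

/-- The extension is `k` itself if `k` is infinite, and otherwise an algebraic closure of `k`, which
is separable because finite fields are perfect. -/
lemma exists_infinite_separable_extension (k : Type u) [Field k] :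
    ∃ (L : Type u) (_ : Field L) (_ : Algebra k L), Infinite L ∧ Algebra.IsSeparable k L := by
  rcases finite_or_infinite k with h | h
  · exact ⟨AlgebraicClosure k, inferInstance, inferInstance, inferInstance, inferInstance⟩
  · exact ⟨k, inferInstance, inferInstance, h, inferInstance⟩

/-- The element `d` plays the role of a discriminant: wherever it is invertible, the reduction of
the polynomial `f` vanishing at `x` is separable. -/
lemma exists_separability_witness {A K F : Type*} [CommRing A] [IsDomain A] [Field K] [Field F]
    [Algebra A K] [IsFractionRing A K] [Algebra K F] [Algebra A F] [IsScalarTower A K F]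
    (x : F) (hx : IsSeparable K x) :
    ∃ (d : A) (f U V : A[X]), d ≠ 0 ∧ aeval x f = 0 ∧ U * f + V * derivative f = C d := by
  obtain ⟨u, v, huv⟩ := hx
  have hnorm : ∀ p : K[X], ∃ (c : A) (P : A[X]), c ≠ 0 ∧
      P.map (algebraMap A K) = C (algebraMap A K c) * p := by
    intro p
    obtain ⟨c, hc, h⟩ := IsLocalization.integerNormalization_spec (nonZeroDivisors A) p
    refine ⟨c, _, nonZeroDivisors.ne_zero hc, h.trans ?_⟩
    rw [← IsScalarTower.algebraMap_smul K c p, smul_eq_C_mul]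
  obtain ⟨a, f, ha, hf⟩ := hnorm (minpoly K x)
  obtain ⟨b, U, hb, hU⟩ := hnorm u
  obtain ⟨c, V, hc, hV⟩ := hnorm v
  refine ⟨a * b * c, f, C c * U, C b * V, mul_ne_zero (mul_ne_zero ha hb) hc, ?_, ?_⟩
  · rw [← aeval_map_algebraMap K, hf]
    simp
  · apply map_injective (algebraMap A K) (IsFractionRing.injective A K)
    simp only [Polynomial.map_add, Polynomial.map_mul, map_C, ← derivative_map, hf, hU, hV,
      derivative_C_mul, map_mul]
    linear_combination C (algebraMap A K a) * C (algebraMap A K b) * C (algebraMap A K c) * huv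

/-- A prime `P` over a maximal ideal `m` has separable residue extension as soon as `B` is generated
over `A` by elements admitting separability witnesses outside `m`. -/
lemma isSeparable_quotient_of_witnesses {A B : Type*} [CommRing A] [CommRing B] [Algebra A B]
    (s : Set B) (hs : Algebra.adjoin A s = ⊤) (m : Ideal A) [m.IsMaximal] (P : Ideal B)
    [P.IsMaximal] [P.LiesOver m]
    (hw : ∀ x ∈ s, ∃ (d : A) (f U V : A[X]), d ∉ m ∧ aeval x f = 0 ∧
      U * f + V * derivative f = C d) :
    letI := Ideal.Quotient.field m
    letI := Ideal.Quotient.field P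
    Algebra.IsSeparable (A ⧸ m) (B ⧸ P) := by
  let := Ideal.Quotient.field m
  let := Ideal.Quotient.field P
  have hsep : ∀ y ∈ Ideal.Quotient.mk P '' s, IsSeparable (A ⧸ m) y := by
    rintro _ ⟨x, hx, rfl⟩
    obtain ⟨d, f, U, V, hd, hf, h⟩ := hw x hx
    have hd' : Ideal.Quotient.mk m d ≠ 0 := by rwa [Ne, Ideal.Quotient.eq_zero_iff_mem]
    have hfsep : (f.map (Ideal.Quotient.mk m)).Separable := by
      have h' := congrArg (Polynomial.map (Ideal.Quotient.mk m)) h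
      simp only [Polynomial.map_add, Polynomial.map_mul, map_C, ← derivative_map] at h'
      refine ⟨C (Ideal.Quotient.mk m d)⁻¹ * U.map (Ideal.Quotient.mk m),
        C (Ideal.Quotient.mk m d)⁻¹ * V.map (Ideal.Quotient.mk m), ?_⟩
      rw [mul_assoc, mul_assoc, ← mul_add, h', ← C_mul, inv_mul_cancel₀ hd', C_1]
    refine hfsep.of_dvd (minpoly.dvd _ _ ?_)
    have h0 : aeval (Ideal.Quotient.mk P x) f = 0 := by
      have := congrArg (Ideal.Quotient.mkₐ A P) hf
      rwa [← aeval_algHom_apply, map_zero] at this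
    rwa [← aeval_map_algebraMap (A ⧸ m)] at h0
  have htop : IntermediateField.adjoin (A ⧸ m) (Ideal.Quotient.mk P '' s) = ⊤ := by
    rw [eq_top_iff]
    rintro y -
    obtain ⟨x, rfl⟩ := Ideal.Quotient.mk_surjective y
    have hx : x ∈ Algebra.adjoin A s := hs ▸ Algebra.mem_top
    induction hx using Algebra.adjoin_induction with
    | mem x hx => exact IntermediateField.subset_adjoin _ _ ⟨x, hx, rfl⟩
    | algebraMap r => exact IntermediateField.algebraMap_mem _ (Ideal.Quotient.mk m r)
    | add x y _ _ hx hy => rw [map_add]; exact add_mem hx hy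
    | mul x y _ _ hx hy => rw [map_mul]; exact mul_mem hx hy
  have hadj := (IntermediateField.isSeparable_adjoin_iff_isSeparable (A ⧸ m) (B ⧸ P)).mpr hsep
  rw [htop] at hadj
  exact Algebra.IsSeparable.of_algHom _ _ (IntermediateField.topEquiv.symm.toAlgHom)

/-- A nonzero polynomial over `k` avoids some maximal ideal with residue field separable over `k`:
the kernel of evaluation at a point with coordinates in an infinite separable extension. -/
lemma MvPolynomial.exists_isMaximal_isSeparable_notMem {k : Type*} [Field k] {n : ℕ}
    (g : MvPolynomial (Fin n) k) (hg : g ≠ 0) :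
    ∃ m : Ideal (MvPolynomial (Fin n) k), m.IsMaximal ∧ g ∉ m ∧
      Algebra.IsSeparable k (MvPolynomial (Fin n) k ⧸ m) := by
  obtain ⟨L, _, _, _, _⟩ := exists_infinite_separable_extension k
  obtain ⟨a, ha⟩ : ∃ a : Fin n → L, MvPolynomial.aeval a g ≠ 0 := by
    by_contra! h
    apply hg
    apply MvPolynomial.map_injective (algebraMap k L) (algebraMap k L).injective
    refine MvPolynomial.funext fun a ↦ ?_
    rw [MvPolynomial.eval_map, ← MvPolynomial.aeval_def, h a, map_zero, map_zero]
  let φ : MvPolynomial (Fin n) k →ₐ[k] L := MvPolynomial.aeval a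
  -- The image of `φ` is a subring of an algebraic extension of `k` containing `k`, hence a field.
  have hmax : (RingHom.ker φ).IsMaximal := by
    have : Algebra.IsIntegral k φ.range :=
      Algebra.IsIntegral.of_injective φ.range.val Subtype.val_injective
    have hfield : IsField φ.range :=
      isField_of_isIntegral_of_isField' (R := k) (Field.toIsField k)
    exact Ideal.Quotient.maximal_of_isField _
      ((Ideal.quotientKerEquivRange φ).toMulEquiv.isField hfield)
  let := Ideal.Quotient.field (RingHom.ker φ)
  exact ⟨RingHom.ker φ, hmax, ha, Algebra.IsSeparable.of_algHom _ _ (Ideal.kerLiftAlg φ)⟩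


/-- Let `k` be a field, `n ≥ 1`, and `F` a finite separable field extension of
the rational function field `k(t₁,…,tₙ)` (the fraction field of `k[t₁,…,tₙ]`).  Let `𝒪_F` be
the integral closure of `k[t₁,…,tₙ]` in `F`.  Then the set of maximal ideals of `𝒪_F` whose
residue field is a separable extension of `k` is dense in `Spec 𝒪_F`. -/
theorem dense_separable_maximal_spectrum_integralClosure
    (k : Type*) [Field k] (n : ℕ) (hn : 1 ≤ n)
    (F : Type*) [Field F]
    [Algebra (FractionRing (MvPolynomial (Fin n) k)) F]
    [FiniteDimensional (FractionRing (MvPolynomial (Fin n) k)) F]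
    [Algebra.IsSeparable (FractionRing (MvPolynomial (Fin n) k)) F]
    [Algebra (MvPolynomial (Fin n) k) F]
    [IsScalarTower (MvPolynomial (Fin n) k) (FractionRing (MvPolynomial (Fin n) k)) F]
    [Algebra k F] [IsScalarTower k (MvPolynomial (Fin n) k) F] :
    Dense {P : PrimeSpectrum (integralClosure (MvPolynomial (Fin n) k) F) |
      P.asIdeal.IsMaximal ∧
      Algebra.IsSeparable k ((integralClosure (MvPolynomial (Fin n) k) F) ⧸ P.asIdeal)} := by
  set A := MvPolynomial (Fin n) k
  set K := FractionRing A
  set B := integralClosure A F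
  rw [PrimeSpectrum.isTopologicalBasis_basic_opens.dense_iff]
  rintro _ ⟨b, rfl⟩ ⟨Q, hQ⟩
  have hb : b ≠ 0 := by
    rintro rfl
    exact hQ (zero_mem _)
  have hfin : Module.Finite A B := IsIntegralClosure.finite A K F B
  have : FaithfulSMul A F := FaithfulSMul.trans A K F
  have : FaithfulSMul A B := inferInstance
  obtain ⟨s, hs⟩ := (inferInstance : Algebra.FiniteType A B)
  choose d f U V hd hf hUV using fun x : B ↦
    exists_separability_witness (A := A) (K := K) (x : F) (Algebra.IsSeparable.isSeparable K _)
  obtain ⟨c, hc, hc0⟩ := Submodule.exists_mem_ne_zero_of_ne_bot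
    (Ideal.comap_ne_bot_of_integral_mem (R := A) hb (Ideal.mem_span_singleton_self b)
      (Algebra.IsIntegral.isIntegral b))
  have hg : c * ∏ x ∈ s, d x ≠ 0 := mul_ne_zero hc0 (Finset.prod_ne_zero_iff.mpr fun x _ ↦ hd x)
  obtain ⟨m, hm, hgm, hsep⟩ := MvPolynomial.exists_isMaximal_isSeparable_notMem _ hg
  obtain ⟨P, hPmax, hPm⟩ : ∃ P : Ideal B, P.IsMaximal ∧ P.LiesOver m := by
    obtain ⟨⟨P, hP, hPm⟩⟩ := Ideal.nonempty_primesOver (S := B) m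
    exact ⟨P, Ideal.IsMaximal.of_liesOver_isMaximal P m, hPm⟩
  have hbP : b ∉ P := fun h ↦ hgm <| m.mul_mem_right _ <| by
    rw [Ideal.mem_of_liesOver P m]
    exact (Ideal.span_singleton_le_iff_mem P).mpr h hc
  refine ⟨⟨P, hPmax.isPrime⟩, hbP, hPmax, ?_⟩
  let := Ideal.Quotient.field m
  let := Ideal.Quotient.field P
  have hres : Algebra.IsSeparable (A ⧸ m) (B ⧸ P) := by
    refine isSeparable_quotient_of_witnesses (s : Set B) hs m P fun x hx ↦
      ⟨d x, f x, U x, V x, fun h ↦ hgm ?_, ?_, hUV x⟩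
    · exact m.mul_mem_left _ (m.mem_of_dvd (Finset.dvd_prod_of_mem d hx) h)
    · exact Subtype.ext ((aeval_algHom_apply B.val x (f x)).symm.trans (hf x))
  have : IsScalarTower k (A ⧸ m) (B ⧸ P) := IsScalarTower.of_algebraMap_eq fun r ↦ by
    refine congrArg (Ideal.Quotient.mk P) (Subtype.ext ?_)
    exact IsScalarTower.algebraMap_apply k A F r
  exact Algebra.IsSeparable.trans k (A ⧸ m) (B ⧸ P)
end

section
/- Let k be a field with algebraic closure k̄, let A = k[x₁,…,xₙ] be a polynomial ring, and let 𝔭 be a prime ideal of A with residue field k(𝔭). Then k(𝔭) is formally smooth over k if and only if k(𝔭) ⊗_k k̄ is a reduced ring. -/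
/-!
Formal smoothness implies geometric reducedness: smoothness at the generic point of `A/𝔭` spreads
out, so `k(𝔭)` is a localization of a smooth `k`-algebra `S = (A/𝔭)_f`. The ring `S ⊗ k̄` is then
smooth over `k̄`, and a smooth algebra `T` over a field `F` is reduced
(`isReduced_of_smooth_field`): smooth base change commutes with integral closure, and `F` is
integrally closed in `F[X]`, so `T` is integrally closed in `T[X]`; but `x X` is nilpotent, hence
integral over `T`, for every nilpotent `x` of `T`. Reducedness passes on to the localization
`k(𝔭) ⊗ k̄`.

Conversely, in characteristic zero every finitely generated field extension is formally smooth. In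
characteristic `q`, reducedness of `k(𝔭) ⊗ k̄` implies that `q`-th powers of `k`-linearly
independent elements remain `k`-linearly independent (`linearIndepOn_pow_of_isReduced`), which is
MacLane's criterion for the finitely generated extension `k(𝔭)/k` to be separably generated, and
separably generated extensions are formally smooth.
-/

universe u

open TensorProduct

/-- A field is integrally closed in its polynomial ring. -/
lemma eq_C_of_isIntegral_field {F : Type*} [Field F] {g : Polynomial F} (hg : IsIntegral F g) :
    g = Polynomial.C (g.coeff 0) := by
  obtain ⟨P, hP, h⟩ := hg
  have h' : P.comp g = 0 := h
  rcases Polynomial.comp_eq_zero_iff.mp h' with h0 | h0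
  · exact absurd h0 hP.ne_zero
  · exact h0.2

lemma isReduced_of_smooth_field (F T : Type*) [Field F] [CommRing T] [Algebra F T]
    [Algebra.Smooth F T] : IsReduced T := by
  refine ⟨fun x hx ↦ ?_⟩
  let y : T ⊗[F] Polynomial F := x ⊗ₜ Polynomial.X
  have hy : IsIntegral T y := by
    obtain ⟨m, hm⟩ := hx
    refine ⟨Polynomial.X ^ m, Polynomial.monic_X_pow m, ?_⟩
    simp [y, Algebra.TensorProduct.tmul_pow, hm]
  obtain ⟨z, hz⟩ := (TensorProduct.toIntegralClosure_bijective_of_smooth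
    (R := F) (S := T) (B := Polynomial F)).2 ⟨y, hy⟩
  -- Elements of `T ⊗ integralClosure F F[X]` are constant polynomials over `T`, so they have no
  -- linear term, whereas the linear coefficient of `x X` is `x`.
  have key (z : T ⊗[F] integralClosure F (Polynomial F)) : ((polyEquivTensor F T).symm
      (TensorProduct.toIntegralClosure F T (Polynomial F) z : T ⊗[F] Polynomial F)).coeff 1
        = 0 := by
    induction z with
    | zero => simp
    | add a b ha hb => simp [ha, hb]
    | tmul a g =>
      have hg := eq_C_of_isIntegral_field g.2
      simp only [TensorProduct.toIntegralClosure, AlgHom.coe_codRestrict,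
        Algebra.TensorProduct.map_tmul, AlgHom.coe_id, id_eq, Subalgebra.coe_val]
      rw [polyEquivTensor_symm_apply_tmul_eq_smul, hg]
      simp
  have := key z
  rw [hz, polyEquivTensor_symm_apply_tmul_eq_smul] at this
  simpa using this

/-- If `∑ cᵢ xᵢ ^ q = 0`, then `∑ xᵢ ⊗ cᵢ ^ (1 / q)` has vanishing `q`-th power in `K ⊗ k̄`,
so it is zero by reducedness, and linear independence of the `xᵢ` over `k` forces all `cᵢ = 0`. -/
lemma linearIndepOn_pow_of_isReduced (k K : Type*) [Field k] [Field K] [Algebra k K]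
    (q : ℕ) (hq : q.Prime) [CharP k q] (h : IsReduced (K ⊗[k] AlgebraicClosure k))
    (s : Finset K) (hs : LinearIndepOn k _root_.id (s : Set K)) :
    LinearIndepOn k (· ^ q) (s : Set K) := by
  have : Fact q.Prime := ⟨hq⟩
  have : ExpChar k q := .prime hq
  have hch : CharP (K ⊗[k] AlgebraicClosure k) q :=
    charP_of_injective_algebraMap (algebraMap k (K ⊗[k] AlgebraicClosure k)).injective q
  have : ExpChar (K ⊗[k] AlgebraicClosure k) q := .prime hq
  choose r hr using fun c : k ↦
    IsAlgClosed.exists_pow_nat_eq (algebraMap k (AlgebraicClosure k) c) hq.pos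
  have hs' : LinearIndependent k (fun i : s ↦ (i : K)) := hs
  change LinearIndependent k (fun i : s ↦ (i : K) ^ q)
  rw [Fintype.linearIndependent_iff]
  intro c hc i
  have hsum : ∑ i : s, (i : K) ⊗ₜ[k] r (c i) = 0 := by
    refine pow_eq_zero_iff hq.ne_zero |>.mp ?_
    rw [sum_pow_char]
    simp only [Algebra.TensorProduct.tmul_pow, hr, Algebra.algebraMap_eq_smul_one,
      TensorProduct.tmul_smul, TensorProduct.smul_tmul']
    rw [← TensorProduct.sum_tmul, hc, TensorProduct.zero_tmul]
  have hli := Module.Flat.linearIndependent_one_tmul (S := AlgebraicClosure k) hs'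
  rw [Fintype.linearIndependent_iff] at hli
  have h0 : r (c i) = 0 := by
    refine hli (fun i ↦ r (c i)) ?_ i
    have := congrArg (TensorProduct.comm k K (AlgebraicClosure k)) hsum
    simpa [TensorProduct.smul_tmul'] using this
  have := hr (c i)
  rw [h0, zero_pow hq.ne_zero] at this
  simpa using this.symm

/-- Let `k` be a field with algebraic closure `k̄`, `A = k[x₁,…,xₙ]` and `𝔭` a
prime of `A` with residue field `k(𝔭)` (realized as any fraction field `κ` of `A/𝔭`).  Then
`k(𝔭)` is formally smooth over `k` iff `k(𝔭) ⊗_k k̄` is reduced. -/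
theorem residueField_formallySmooth_iff_isReduced_tensor
    (k : Type u) [Field k] (n : ℕ)
    (p : Ideal (MvPolynomial (Fin n) k)) [p.IsPrime]
    (κ : Type u) [Field κ] [Algebra (MvPolynomial (Fin n) k ⧸ p) κ]
    [IsFractionRing (MvPolynomial (Fin n) k ⧸ p) κ]
    [Algebra k κ] [IsScalarTower k (MvPolynomial (Fin n) k ⧸ p) κ] :
    Algebra.FormallySmooth k κ ↔ IsReduced (κ ⊗[k] AlgebraicClosure k) := by
  set D := MvPolynomial (Fin n) k ⧸ p with hD
  constructor
  · intro hsm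
    have hloc : IsLocalization (⊥ : Ideal D).primeCompl κ := by
      rw [Ideal.primeCompl_bot]
      infer_instance
    have hat : Algebra.IsSmoothAt k (⊥ : Ideal D) :=
      Algebra.FormallySmooth.of_equiv ((IsLocalization.algEquiv (⊥ : Ideal D).primeCompl κ
        (Localization.AtPrime (⊥ : Ideal D))).restrictScalars k)
    have : Algebra.FinitePresentation k D :=
      Algebra.FinitePresentation.of_finiteType.mp inferInstance
    obtain ⟨f, hf, hS⟩ := Algebra.IsSmoothAt.exists_notMem_smooth k (⊥ : Ideal D)
    have hle : Submonoid.powers f ≤ nonZeroDivisors D :=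
      powers_le_nonZeroDivisors_of_noZeroDivisors (by simpa using hf)
    let S := Localization.Away f
    let : Algebra S κ := IsLocalization.localizationAlgebraOfSubmonoidLe S κ _ _ hle
    have : IsScalarTower D S κ :=
      IsLocalization.localization_isScalarTower_of_submonoid_le S κ _ _ hle
    have : IsScalarTower k S κ := .to₁₃₄ k D S κ
    have := IsLocalization.isLocalization_of_submonoid_le S κ _ _ hle
    have hred : IsReduced (AlgebraicClosure k ⊗[k] S) :=
      isReduced_of_smooth_field (AlgebraicClosure k) _
    let T := S ⊗[k] AlgebraicClosure k
    have hT : IsReduced T := isReduced_of_injective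
      (Algebra.TensorProduct.comm k S (AlgebraicClosure k)) (AlgEquiv.injective _)
    let N : Submonoid S := (nonZeroDivisors D).map (algebraMap D S)
    have hN : IsReduced (T ⊗[S] κ) :=
      isReduced_localizationPreserves (Algebra.algebraMapSubmonoid T N) (T ⊗[S] κ) hT
    -- `κ ⊗ₖ k̄` is the base change of `S ⊗ₖ k̄` along the localization `S → κ`.
    let e : κ ⊗[k] AlgebraicClosure k ≃ₐ[S] T ⊗[S] κ :=
      ((Algebra.TensorProduct.cancelBaseChange k S S κ (AlgebraicClosure k)).symm).trans
        (Algebra.TensorProduct.comm S κ T)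
    exact isReduced_of_injective e e.injective
  · intro hred
    have : Algebra.EssFiniteType D κ := .of_isLocalization κ (nonZeroDivisors D)
    have : Algebra.EssFiniteType k κ := .comp k D κ
    obtain h0 | ⟨q, hq, hqk⟩ := CharP.exists' k
    · infer_instance
    · have : ExpChar k q := .prime hq.out
      obtain ⟨s, hs, H⟩ :=
        exists_isTranscendenceBasis_and_isSeparable_of_linearIndepOn_pow_of_essFiniteType
          (k := k) (K := κ) q hq.out (linearIndepOn_pow_of_isReduced k κ q hq.out hred)
      have : Algebra.IsSeparable
          (IntermediateField.adjoin k (Set.range ((↑) : s → κ))) κ := by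
        convert! H <;> simp
      exact .of_algebraicIndependent_of_isSeparable hs.1
end

section
/- Let k be a field, A = k[x₁,…,xₙ] a polynomial ring, and 𝔭 a prime ideal of A with residue field k(𝔭). Then k(𝔭) is formally smooth over k if and only if 𝔭 equals the intersection of all maximal ideals 𝔪 of A containing 𝔭 whose residue field k(𝔪) is separable over k. -/
/-!
Let `A = k[x₁,…,xₙ]`, `B = A/𝔭` and `κ = Frac B`. Call a maximal ideal with residue field separable
over `k` a *separable point*. The right-hand side says that every nonzero `b ∈ B` is nonzero at some
separable point of `B` (`eq_sInf_iff`).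

If `κ` is formally smooth over `k`, then `B` is smooth over `k` at its generic point, so some
localization `B_f` is étale over a polynomial ring `k[y₁,…,y_d]`. The image in affine space of the
locus where `b ≠ 0` is open and nonempty, so for infinite `k` it contains a `k`-rational point; the
residue fields of the points of `B_f` above it are unramified, hence separable, over `k`
(`exists_separable_of_smooth`). If `k` is finite it is perfect, and the claim is the Jacobson
property of `B` (`exists_separable_of_perfect`).

Conversely, in characteristic `p > 0`, MacLane's criterion reduces the existence of a separating
transcendence basis of `κ/k`, hence formal smoothness, to the statement that `p`-th powers of
`k`-linearly independent elements are `k`-linearly independent. After clearing denominators the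
elements `vᵢ` lie in `B`. In a relation `∑ cᵢ vᵢᵖ = 0`, expand the `cᵢ` in a basis `eⱼ` of their
`kᵖ`-span: `cᵢ = ∑ⱼ aᵢⱼᵖ eⱼ`. This gives `∑ⱼ eⱼ (∑ᵢ aᵢⱼ vᵢ)ᵖ = 0`. The `eⱼ` stay linearly independent
over the `p`-th powers of any separable extension (`relation_trivial_of_separable`), so each
`∑ᵢ aᵢⱼ vᵢ` vanishes at all separable points, hence is zero, and so all `aᵢⱼ` vanish
(`linearIndependent_pow_of_separable_points`).
-/

universe u

open MvPolynomial

/-! ### From smoothness to separable points -/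


/-- In an unramified algebra over affine space, the fibre above the rational point `a` is unramified
over `k`: the structure map from the polynomial ring to `C ⧸ Q` factors through evaluation at `a`. -/
theorem unram_of_over_rational_point {k σ C : Type*} [Field k] [CommRing C]
    [Algebra k C] [Algebra (MvPolynomial σ k) C] [IsScalarTower k (MvPolynomial σ k) C]
    [Algebra.FormallyUnramified (MvPolynomial σ k) C] (a : σ → k) (Q : Ideal C)
    (hQ : ∀ g : MvPolynomial σ k, eval a g = 0 → algebraMap _ C g ∈ Q) :
    Algebra.FormallyUnramified k (C ⧸ Q) := by
  let : Algebra (MvPolynomial σ k) k := (eval a).toAlgebra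
  have : IsScalarTower (MvPolynomial σ k) k (C ⧸ Q) := by
    refine IsScalarTower.of_algebraMap_eq fun g => ?_
    have h := hQ (g - MvPolynomial.C (eval a g)) (by simp)
    rw [← Ideal.Quotient.eq_zero_iff_mem, map_sub, map_sub, sub_eq_zero] at h
    rw [IsScalarTower.algebraMap_apply (MvPolynomial σ k) C (C ⧸ Q),
      IsScalarTower.algebraMap_apply k C (C ⧸ Q),
      IsScalarTower.algebraMap_apply k (MvPolynomial σ k) C]
    exact h
  have : Algebra.FormallyUnramified C (C ⧸ Q) :=
    Algebra.FormallyUnramified.of_surjective (Algebra.ofId C (C ⧸ Q)) Ideal.Quotient.mk_surjective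
  have : Algebra.FormallyUnramified (MvPolynomial σ k) (C ⧸ Q) :=
    Algebra.FormallyUnramified.comp _ C _
  exact Algebra.FormallyUnramified.of_restrictScalars (MvPolynomial σ k) k (C ⧸ Q)

theorem ker_isMaximal_and_isSeparable {k B L : Type*} [Field k] [CommRing B] [Algebra k B]
    [Field L] [Algebra k L] [Module.Finite k L] [Algebra.IsSeparable k L] (φ : B →ₐ[k] L) :
    (RingHom.ker φ).IsMaximal ∧ Algebra.IsSeparable k (B ⧸ RingHom.ker φ) := by
  have hinj := Ideal.kerLiftAlg_injective φ
  have : (RingHom.ker φ).IsPrime := RingHom.ker_isPrime _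
  have : Module.Finite k (B ⧸ RingHom.ker φ) :=
    Module.Finite.of_injective (Ideal.kerLiftAlg φ).toLinearMap hinj
  have hf : IsField (B ⧸ RingHom.ker φ) :=
    isField_of_isIntegral_of_isField' (Field.toIsField k)
  have hmax := Ideal.Quotient.maximal_of_isField _ hf
  refine ⟨hmax, ?_⟩
  let := Ideal.Quotient.field (RingHom.ker φ)
  exact Algebra.IsSeparable.of_algHom k L (Ideal.kerLiftAlg φ)

/-- On a finite type domain over an infinite field that is smooth at its generic point, a nonzero
function is nonzero at some separable point. -/
theorem exists_separable_of_smooth {k B : Type*} [Field k] [Infinite k] [CommRing B] [IsDomain B]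
    [Algebra k B] [Algebra.FiniteType k B] [Algebra.IsSmoothAt k (⊥ : Ideal B)]
    (b : B) (hb : b ≠ 0) :
    ∃ Q : Ideal B, Q.IsMaximal ∧ b ∉ Q ∧ Algebra.IsSeparable k (B ⧸ Q) := by
  have : Algebra.FinitePresentation k B := Algebra.FinitePresentation.of_finiteType.mp inferInstance
  obtain ⟨f, hf, d, _, _, _⟩ :=
    Algebra.IsSmoothAt.exists_isStandardEtale_mvPolynomial (R := k) (p := (⊥ : Ideal B))
  set C := Localization.Away f
  have : Algebra.Etale (MvPolynomial (Fin d) k) C := inferInstance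
  have hopen := PrimeSpectrum.isOpenMap_comap_of_hasGoingDown_of_finitePresentation
    (R := MvPolynomial (Fin d) k) (S := C)
  have hf0 : f ≠ 0 := by simpa using hf
  have hinj : Function.Injective (algebraMap B C) :=
    IsLocalization.injective C (powers_le_nonZeroDivisors_of_noZeroDivisors hf0)
  have : IsDomain C := IsLocalization.isDomain_of_le_nonZeroDivisors (R := B) (S := C) (M := .powers f)
    (powers_le_nonZeroDivisors_of_noZeroDivisors hf0)
  -- The image in affine space of the locus `b ≠ 0` is open and contains the image of the generic
  -- point, so it contains a nonempty basic open set `D(g)`.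
  let U := PrimeSpectrum.basicOpen (algebraMap B C b)
  have hU := hopen _ U.isOpen
  have hbC : algebraMap B C b ≠ 0 := by simpa using hinj.ne hb
  let x : PrimeSpectrum C := ⟨⊥, Ideal.isPrime_bot⟩
  have hx : x ∈ U := by simpa [U, x, PrimeSpectrum.mem_basicOpen] using hbC
  obtain ⟨_, ⟨_, ⟨g, rfl⟩, rfl⟩, hxg, hg⟩ :=
    PrimeSpectrum.isBasis_basic_opens.exists_subset_of_mem_open (Set.mem_image_of_mem _ hx) hU
  have hg0 : g ≠ 0 := by
    rintro rfl
    simp at hxg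
  -- As `k` is infinite, `D(g)` has a rational point `a`.
  obtain ⟨a, ha⟩ : ∃ a, eval a g ≠ 0 := by
    by_contra! h
    exact hg0 (MvPolynomial.funext fun a => by simpa using h a)
  let y : PrimeSpectrum (MvPolynomial (Fin d) k) := ⟨RingHom.ker (eval a), RingHom.ker_isPrime _⟩
  obtain ⟨q, hqU, hqy⟩ := hg (show y ∈ (PrimeSpectrum.basicOpen g : Set _) from ha)
  have hQ : ∀ g : MvPolynomial (Fin d) k, eval a g = 0 → algebraMap _ C g ∈ q.asIdeal := by
    intro g hg
    have : g ∈ y.asIdeal := hg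
    rw [← hqy] at this
    exact this
  have := unram_of_over_rational_point a q.asIdeal hQ
  have : Algebra.FiniteType k C := Algebra.FiniteType.trans (S := MvPolynomial (Fin d) k)
    inferInstance inferInstance
  have : Module.Finite k (C ⧸ q.asIdeal) := Algebra.FormallyUnramified.finite_of_free k _
  have hfield : IsField (C ⧸ q.asIdeal) :=
    isField_of_isIntegral_of_isField' (Field.toIsField k)
  let := hfield.toField
  have : Algebra.IsSeparable k (C ⧸ q.asIdeal) := Algebra.FormallyUnramified.isSeparable k _
  -- The residue field of `B` at the contraction of `q` embeds into `C ⧸ q`.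
  let φ : B →ₐ[k] C ⧸ q.asIdeal :=
    (Ideal.Quotient.mkₐ k q.asIdeal).comp (IsScalarTower.toAlgHom k B C)
  obtain ⟨h1, h2⟩ := ker_isMaximal_and_isSeparable φ
  refine ⟨_, h1, fun hbk => ?_, h2⟩
  exact hqU (Ideal.Quotient.eq_zero_iff_mem.mp hbk)

theorem exists_separable_of_perfect {k B : Type*} [Field k] [PerfectField k] [CommRing B]
    [IsDomain B] [Algebra k B] [Algebra.FiniteType k B] (b : B) (hb : b ≠ 0) :
    ∃ Q : Ideal B, Q.IsMaximal ∧ b ∉ Q ∧ Algebra.IsSeparable k (B ⧸ Q) := by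
  have : IsJacobsonRing B := isJacobsonRing_of_finiteType (A := k)
  have hj : (⊥ : Ideal B).jacobson = ⊥ :=
    IsJacobsonRing.out ‹_› (Ideal.isRadical_bot_iff.mpr inferInstance)
  have hbj : b ∉ (⊥ : Ideal B).jacobson := by rwa [hj]
  rw [Ideal.jacobson, Submodule.mem_sInf] at hbj
  push Not at hbj
  obtain ⟨Q, ⟨-, hQ⟩, hbQ⟩ := hbj
  let := Ideal.Quotient.field Q
  have : Module.Finite k (B ⧸ Q) := finite_of_finite_type_of_isJacobsonRing k (B ⧸ Q)
  exact ⟨Q, hQ, hbQ, inferInstance⟩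

/-! ### Linear independence of `p`-th powers -/

/-- A separable extension `E` of `k` preserves linear independence over `p`-th powers: if the `e j`
admit no nontrivial relation with coefficients in `kᵖ`, they admit none with coefficients in
`Eᵖ`. -/
theorem relation_trivial_of_separable {k E J : Type*} [Field k] [Field E] [Algebra k E] [Fintype J]
    [Module.Finite k E] [Algebra.IsSeparable k E] (p : ℕ) [ExpChar k p] (e : J → k)
    (he : ∀ t : J → k, ∑ j, e j * t j ^ p = 0 → t = 0)
    (y : J → E) (hy : ∑ j, e j • y j ^ p = 0) : y = 0 := by
  have : ExpChar E p := expChar_of_injective_algebraMap (algebraMap k E).injective p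
  let b := Module.finBasis k E
  have hb : LinearIndependent k (fun l => b l ^ p) := by
    simpa using b.linearIndependent.map_pow_expChar_pow_of_isSeparable (q := p) (n := 1)
  have key : ∑ l, (∑ j, e j * b.repr (y j) l ^ p) • b l ^ p = 0 := by
    rw [← hy]
    simp_rw [Finset.sum_smul]
    rw [Finset.sum_comm]
    refine Finset.sum_congr rfl fun j _ => ?_
    conv_rhs => rw [← b.sum_repr (y j), sum_pow_char p, Finset.smul_sum]
    simp_rw [smul_pow, mul_smul]
  have h0 := Fintype.linearIndependent_iff.mp hb _ key
  funext j
  refine b.ext_elem fun l => ?_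
  simpa using congrFun (he (fun j => b.repr (y j) l) (h0 l)) j

/-- If the separable points of `B` are dense, raising to the `p`-th power preserves `k`-linear
independence in `B`. -/
theorem linearIndependent_pow_of_separable_points {k B ι : Type*} [Field k] [CommRing B] [Algebra k B]
    [Algebra.FiniteType k B] [Fintype ι] (p : ℕ) [hp : Fact p.Prime] [ExpChar k p] [CharP B p]
    (hB : ∀ b : B, b ≠ 0 → ∃ Q : Ideal B, Q.IsMaximal ∧ b ∉ Q ∧ Algebra.IsSeparable k (B ⧸ Q))
    (v : ι → B) (hv : LinearIndependent k v) : LinearIndependent k (fun i => v i ^ p) := by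
  rw [Fintype.linearIndependent_iff] at hv ⊢
  intro c hc
  let K₀ := (frobenius k p).fieldRange
  let W := Submodule.span K₀ (Set.range c)
  have : Module.Finite K₀ W := Module.Finite.span_of_finite K₀ (Set.finite_range c)
  let e := Module.finBasis K₀ W
  have hcW (i) : c i ∈ W := Submodule.subset_span ⟨i, rfl⟩
  -- The coordinates of `c i` lie in `kᵖ`; `a i j` is the `p`-th root of the `j`-th one.
  choose a ha using fun i j => (e.repr ⟨c i, hcW i⟩ j).2
  have hce (i) : c i = ∑ j, (e j : k) * a i j ^ p := by
    have := congrArg (Subtype.val) (e.sum_repr ⟨c i, hcW i⟩)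
    rw [AddSubmonoidClass.coe_finsetSum] at this
    refine this.symm.trans ?_
    refine Finset.sum_congr rfl fun j _ => ?_
    rw [mul_comm, ← frobenius_def, ha]
    rfl
  have he : ∀ t : Fin _ → k, ∑ j, (e j : k) * t j ^ p = 0 → t = 0 := by
    intro t ht
    have := Fintype.linearIndependent_iff.mp e.linearIndependent
      (fun j => (⟨frobenius k p (t j), t j, rfl⟩ : K₀)) (Subtype.ext ?_)
    · funext j
      simpa using congrArg Subtype.val (this j)
    · rw [AddSubmonoidClass.coe_finsetSum, Submodule.coe_zero, ← ht]
      refine Finset.sum_congr rfl fun j _ => ?_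
      rw [mul_comm]
      rfl
  have hz (j) : ∑ i, a i j • v i = 0 := by
    by_contra hne
    obtain ⟨Q, hQ, hbQ, hsep⟩ := hB _ hne
    let := Ideal.Quotient.field Q
    have : Module.Finite k (B ⧸ Q) := finite_of_finite_type_of_isJacobsonRing k (B ⧸ Q)
    have := relation_trivial_of_separable p (fun j => (e j : k)) he
      (fun j => Ideal.Quotient.mkₐ k Q (∑ i, a i j • v i)) ?_
    · exact hbQ (Ideal.Quotient.eq_zero_iff_mem.mp (congrFun this j))
    · have h2 := congrArg (Ideal.Quotient.mkₐ k Q) hc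
      rw [map_zero] at h2
      rw [← h2]
      simp_rw [← map_pow, ← map_smul, ← map_sum]
      congr 1
      simp_rw [sum_pow_char p, hce, Finset.sum_smul, Finset.smul_sum]
      rw [Finset.sum_comm]
      simp_rw [smul_pow, mul_smul]
  intro i
  rw [hce]
  refine Finset.sum_eq_zero fun j _ => ?_
  rw [hv _ (hz j) i, zero_pow hp.out.ne_zero, mul_zero]
/-! ### The equivalence -/

/-- Maximal ideals of `A` containing `p` correspond to maximal ideals of `A ⧸ p`, with the same
residue fields. -/
theorem eq_sInf_iff {k A : Type*} [Field k] [CommRing A] [Algebra k A] (p : Ideal A) :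
    p = sInf {m : Ideal A | m.IsMaximal ∧ p ≤ m ∧ Algebra.IsSeparable k (A ⧸ m)} ↔
    ∀ b : A ⧸ p, b ≠ 0 → ∃ Q : Ideal (A ⧸ p), Q.IsMaximal ∧ b ∉ Q ∧
      Algebra.IsSeparable k ((A ⧸ p) ⧸ Q) := by
  constructor
  · intro h b hb
    obtain ⟨f, rfl⟩ := Ideal.Quotient.mk_surjective b
    have hf : f ∉ p := fun hf => hb (Ideal.Quotient.eq_zero_iff_mem.mpr hf)
    rw [h, Submodule.mem_sInf] at hf
    push Not at hf
    obtain ⟨m, ⟨hm, hpm, hsep⟩, hfm⟩ := hf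
    have hker : RingHom.ker (Ideal.Quotient.mk p) ≤ m := by rwa [Ideal.mk_ker]
    have hcm : Ideal.comap (Ideal.Quotient.mk p) (Ideal.map (Ideal.Quotient.mk p) m) = m := by
      rw [Ideal.comap_map_of_surjective' _ Ideal.Quotient.mk_surjective]
      exact sup_eq_left.mpr hker
    have hmax : (Ideal.map (Ideal.Quotient.mk p) m).IsMaximal :=
      Ideal.IsMaximal.map_of_surjective_of_ker_le Ideal.Quotient.mk_surjective hker
    refine ⟨Ideal.map (Ideal.Quotient.mk p) m, hmax, fun h' => hfm (hcm.le h'), ?_⟩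
    let := Ideal.Quotient.field m
    let := Ideal.Quotient.field (Ideal.map (Ideal.Quotient.mk p) m)
    exact Algebra.IsSeparable.of_algHom k (A ⧸ m) (DoubleQuot.quotQuotEquivQuotOfLEₐ k hpm).toAlgHom
  · intro h
    refine le_antisymm (le_sInf fun m hm => hm.2.1) fun f hf => ?_
    by_contra hfp
    obtain ⟨Q, hQ, hfQ, hsep⟩ := h (Ideal.Quotient.mk p f)
      fun h0 => hfp (Ideal.Quotient.eq_zero_iff_mem.mp h0)
    have hmax : (Q.comap (Ideal.Quotient.mk p)).IsMaximal :=
      Ideal.comap_isMaximal_of_surjective _ Ideal.Quotient.mk_surjective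
    refine hfQ (Submodule.mem_sInf.mp hf (Q.comap (Ideal.Quotient.mk p)) ⟨hmax, ?_, ?_⟩)
    · intro x hx
      rw [Ideal.mem_comap, Ideal.Quotient.eq_zero_iff_mem.mpr hx]
      exact Q.zero_mem
    · let := Ideal.Quotient.field Q
      let := Ideal.Quotient.field (Q.comap (Ideal.Quotient.mk p))
      exact Algebra.IsSeparable.of_algHom k ((A ⧸ p) ⧸ Q)
        (Ideal.quotientMapₐ Q (Ideal.Quotient.mkₐ k p) le_rfl)

/-- If the separable points of `B` are dense, MacLane's criterion applies to its fraction field. -/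
theorem formallySmooth_of_separable_points {k B κ : Type*} [Field k] [CommRing B] [IsDomain B]
    [Algebra k B] [Algebra.FiniteType k B] [Field κ] [Algebra B κ] [IsFractionRing B κ]
    [Algebra k κ] [IsScalarTower k B κ]
    (hB : ∀ b : B, b ≠ 0 → ∃ Q : Ideal B, Q.IsMaximal ∧ b ∉ Q ∧ Algebra.IsSeparable k (B ⧸ Q)) :
    Algebra.FormallySmooth k κ := by
  have : Algebra.EssFiniteType B κ := .of_isLocalization _ (nonZeroDivisors B)
  have : Algebra.EssFiniteType k κ := .comp k B κ
  obtain _ | ⟨p, hp, hpk⟩ := CharP.exists' k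
  · infer_instance
  have : ExpChar k p := .prime hp.out
  have : CharP B p := charP_of_injective_algebraMap (algebraMap k B).injective p
  obtain ⟨s, hs, hsep⟩ :=
    exists_isTranscendenceBasis_and_isSeparable_of_linearIndepOn_pow_of_essFiniteType
    (k := k) (K := κ) p hp.out fun s hs => by
      -- A common denominator `d` of `s` reduces the criterion to elements `v` of `B`.
      obtain ⟨⟨d, hd⟩, hds⟩ := IsLocalization.exist_integer_multiples_of_finset (nonZeroDivisors B) s
      have hd0 : algebraMap B κ d ≠ 0 := IsFractionRing.to_map_ne_zero_of_mem_nonZeroDivisors hd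
      choose v hv using fun i : s => hds i.1 i.2
      have hv' (i : s) : algebraMap B κ (v i) = algebraMap B κ d * i.1 := by
        rw [hv i]; exact Algebra.smul_def _ _
      have hvi : LinearIndependent k v := by
        refine LinearIndependent.of_comp (IsScalarTower.toAlgHom k B κ).toLinearMap ?_
        have := LinearIndependent.map' (v := fun i : s => i.1) hs
          (LinearMap.mulLeft k (algebraMap B κ d))
          (LinearMap.ker_eq_bot.mpr (mul_right_injective₀ hd0))
        have heq : ⇑(IsScalarTower.toAlgHom k B κ).toLinearMap ∘ v =
            LinearMap.mulLeft k (algebraMap B κ d) ∘ fun i : s => i.1 := _root_.funext hv'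
        rw [heq]
        exact this
      have hpow := (linearIndependent_pow_of_separable_points p hB v hvi).map'
        (IsScalarTower.toAlgHom k B κ).toLinearMap
        (LinearMap.ker_eq_bot.mpr (IsFractionRing.injective B κ))
      refine LinearIndependent.of_comp (LinearMap.mulLeft k (algebraMap B κ d ^ p)) ?_
      have heq : ⇑(IsScalarTower.toAlgHom k B κ).toLinearMap ∘ (fun i => v i ^ p) =
          LinearMap.mulLeft k (algebraMap B κ d ^ p) ∘ fun i : s => i.1 ^ p := by
        funext i
        simp [hv', mul_pow]
      rw [heq] at hpow
      exact hpow
  have : Algebra.IsSeparable (IntermediateField.adjoin k (Set.range ((↑) : s → κ))) κ := by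
    convert! hsep <;> simp
  exact .of_algebraicIndependent_of_isSeparable hs.1

/-- Let `k` be a field, `A = k[x₁,…,xₙ]` and `𝔭` a prime of `A` with residue
field `k(𝔭)` (realized as any fraction field `κ` of `A/𝔭`).  Then `k(𝔭)` is formally smooth
over `k` iff `𝔭` is the intersection of all maximal ideals `𝔪 ⊇ 𝔭` of `A` whose residue field
`A/𝔪` is separable over `k`. -/
theorem residueField_formallySmooth_iff_eq_sInf_separable_maximal
    (k : Type u) [Field k] (n : ℕ)
    (p : Ideal (MvPolynomial (Fin n) k)) [p.IsPrime]
    (κ : Type u) [Field κ] [Algebra (MvPolynomial (Fin n) k ⧸ p) κ]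
    [IsFractionRing (MvPolynomial (Fin n) k ⧸ p) κ]
    [Algebra k κ] [IsScalarTower k (MvPolynomial (Fin n) k ⧸ p) κ] :
    Algebra.FormallySmooth k κ ↔
      p = sInf {m : Ideal (MvPolynomial (Fin n) k) |
        m.IsMaximal ∧ p ≤ m ∧ Algebra.IsSeparable k (MvPolynomial (Fin n) k ⧸ m)} := by
  rw [eq_sInf_iff]
  refine ⟨fun hsm b hb => ?_, formallySmooth_of_separable_points⟩
  cases finite_or_infinite k
  · exact exists_separable_of_perfect b hb
  · let B := MvPolynomial (Fin n) k ⧸ p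
    have hM : (⊥ : Ideal B).primeCompl = nonZeroDivisors B := by
      ext x; simp [Ideal.primeCompl]
    have : IsLocalization (⊥ : Ideal B).primeCompl κ := by rw [hM]; infer_instance
    let e : κ ≃ₐ[B] Localization.AtPrime (⊥ : Ideal B) :=
      IsLocalization.algEquiv (⊥ : Ideal B).primeCompl _ _
    have : Algebra.IsSmoothAt k (⊥ : Ideal B) := .of_equiv (e.restrictScalars k)
    exact exists_separable_of_smooth b hb
end

section
/- Let k be a field, A = k[x₁,…,xₙ] a polynomial ring, and 𝔭 a prime ideal of A with residue field k(𝔭). Then k(𝔭) is formally smooth over k if and only if there exist r ∈ ℕ, k-derivations d₁,…,d_r ∈ Der_k(A, A) and elements g₁,…,g_r ∈ A such that the images of g₁,…,g_r generate the ideal 𝔭A_𝔭 of the localization A_𝔭 and the determinant of the r×r matrix (d_i(g_j)) does not lie in 𝔭. -/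
/-!
Write `A = k[x₁,…,xₙ]`, `B = A_𝔭`, `𝔪 = 𝔭B` and `κ = B/𝔪`. Since `B` is formally smooth over `k`,
the field `κ` is formally smooth over `k` iff the `κ`-linear map `𝔪/𝔪² → κ ⊗ Ω[B/k]`, `x ↦ 1 ⊗ dx`,
is split injective, and over a field this just means injective
(`formallySmooth_residueField_iff_injective`).

Given `dᵢ` and `gⱼ` as in the statement, the classes of the `gⱼ` span `𝔪/𝔪²`, and each `dᵢ` extends
to a functional on `κ ⊗ Ω[B/k]` (`exists_linearMap_of_derivation`). Applying these functionals to
the image of `∑ cⱼ gⱼ` multiplies `c` by the Jacobian matrix, which is invertible over `κ`; hence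
the map is injective (`cotangentComplex_injective_of_jacobian`).

Conversely, choose `gⱼ ∈ 𝔭` whose classes form a basis of `𝔪/𝔪²`; by Nakayama they generate `𝔪`
(`exists_basis_cotangent`). A left inverse of the map followed by the coordinate functionals gives
derivations `δᵢ : A → κ` with `δᵢ(gᵢ) = 1` and `δᵢ(gⱼ) = 0` for `j ≠ i`. As a
derivation of `A` may be prescribed arbitrarily on the variables, clearing denominators of the
`δᵢ(xₗ)` lifts some `sᵢ δᵢ`, `sᵢ ∉ 𝔭`, to a derivation
`dᵢ` of `A`. Modulo `𝔭` the Jacobian matrix is then diagonal with entries `sᵢ`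
(`exists_jacobian_of_injective`).
-/

universe u
open Algebra KaehlerDifferential TensorProduct

section
variable (k : Type u) [Field k] {A : Type u} [CommRing A] [Algebra k A]
    (p : Ideal A) [p.IsPrime]

/-- The surjection `A_𝔭 → k(𝔭)`, as an extension of the `k`-algebra `k(𝔭)`. Its `Cotangent` is
`𝔭A_𝔭/(𝔭A_𝔭)²` and its `CotangentSpace` is `k(𝔭) ⊗ Ω[A_𝔭/k]`. -/
noncomputable abbrev residueExtension : Extension.{u} k p.ResidueField where
  Ring := Localization.AtPrime p
  σ := Function.surjInv IsLocalRing.residue_surjective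
  algebraMap_σ := Function.surjInv_eq IsLocalRing.residue_surjective

lemma ker_residueExtension :
    (residueExtension k p).ker = IsLocalRing.maximalIdeal (Localization.AtPrime p) :=
  IsLocalRing.ker_residue

lemma ker_residueExtension_eq_map :
    (residueExtension k p).ker = p.map (algebraMap A (Localization.AtPrime p)) := by
  rw [ker_residueExtension, Localization.AtPrime.map_eq_maximalIdeal]

instance [FormallySmooth k A] : FormallySmooth k (Localization.AtPrime p) :=
  have := FormallySmooth.of_isLocalization (Rₘ := Localization.AtPrime p) p.primeCompl
  .comp k A _

lemma formallySmooth_residueField_iff_injective [FormallySmooth k A] :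
    FormallySmooth k p.ResidueField ↔
      Function.Injective (residueExtension k p).cotangentComplex := by
  rw [(residueExtension k p).formallySmooth_iff_split_injection]
  constructor
  · rintro ⟨l, hl⟩
    exact Function.LeftInverse.injective (g := l) (LinearMap.congr_fun hl)
  · intro h
    exact LinearMap.exists_leftInverse_of_injective _ (LinearMap.ker_eq_bot.mpr h)

/-- A derivation of `A` induces a functional on `k(𝔭) ⊗ Ω[A_𝔭/k]`, because `Ω[A_𝔭/k]` is the
localization of `Ω[A/k]` at `𝔭`. -/
lemma exists_linearMap_of_derivation (d : Derivation k A A) :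
    ∃ f : (residueExtension k p).CotangentSpace →ₗ[p.ResidueField] p.ResidueField,
      ∀ a : A, f (1 ⊗ₜ D k (Localization.AtPrime p) (algebraMap A _ a)) =
        algebraMap A p.ResidueField (d a) := by
  let g : Ω[A⁄k] →ₗ[A] p.ResidueField :=
    ((Algebra.linearMap A p.ResidueField).compDer d).liftKaehlerDifferential
  have hs (s : p.primeCompl) : IsUnit (algebraMap A (Module.End A p.ResidueField) s) := by
    have hs' : algebraMap A p.ResidueField s ≠ 0 := fun h ↦
      s.2 (Ideal.algebraMap_residueField_eq_zero.mp h)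
    rw [Module.End.isUnit_iff]
    constructor
    · intro x y hxy
      simp only [Module.algebraMap_end_apply, Algebra.smul_def] at hxy
      exact mul_left_cancel₀ hs' hxy
    · intro x
      exact ⟨(algebraMap A p.ResidueField s)⁻¹ * x, by
        rw [Module.algebraMap_end_apply, Algebra.smul_def, mul_inv_cancel_left₀ hs']⟩
  let h : Ω[Localization.AtPrime p⁄k] →ₗ[A] p.ResidueField :=
    IsLocalizedModule.lift p.primeCompl (map k k A (Localization.AtPrime p)) g hs
  let h' := LinearMap.extendScalarsOfIsLocalization p.primeCompl (Localization.AtPrime p) h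
  refine ⟨h'.liftBaseChange _, fun a ↦ ?_⟩
  rw [LinearMap.liftBaseChange_tmul, one_smul]
  have := LinearMap.congr_fun (IsLocalizedModule.lift_comp p.primeCompl
    (map k k A (Localization.AtPrime p)) g hs) (D k A a)
  simpa [g, h', h] using this

lemma cotangentComplex_injective_of_jacobian {r : ℕ} (d : Fin r → Derivation k A A)
    (g : Fin r → A)
    (hg : p.map (algebraMap A (Localization.AtPrime p)) =
      Ideal.span (Set.range fun i ↦ algebraMap A (Localization.AtPrime p) (g i)))
    (hd : (Matrix.of fun i j ↦ d i (g j)).det ∉ p) :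
    Function.Injective (residueExtension k p).cotangentComplex := by
  have hker := hg.symm.trans (ker_residueExtension_eq_map k p).symm
  have hspan := Extension.Cotangent.span_eq_top_of_span_eq_ker
    (P := residueExtension k p) (fun i ↦ algebraMap A (Localization.AtPrime p) (g i)) hker
  rw [injective_iff_map_eq_zero]
  intro x hx
  obtain ⟨c, rfl⟩ := (Submodule.mem_span_range_iff_exists_fun p.ResidueField).mp
    (hspan.ge (Submodule.mem_top (x := x)))
  choose f hf using fun i ↦ exists_linearMap_of_derivation k p (d i)
  suffices c = 0 by simp [this]
  refine Matrix.eq_zero_of_mulVec_eq_zero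
    (M := (Matrix.of fun i j ↦ d i (g j)).map (algebraMap A p.ResidueField)) ?_ ?_
  · rw [← RingHom.mapMatrix_apply, ← RingHom.map_det]
    exact fun h ↦ hd (Ideal.algebraMap_residueField_eq_zero.mp h)
  · ext i
    have := congrArg (f i) hx
    simp only [map_sum, map_smul, map_zero] at this
    have hfg (j) : f i ((residueExtension k p).cotangentComplex (.mk
        ⟨_, hker.le (Ideal.subset_span ⟨j, rfl⟩)⟩)) = algebraMap A p.ResidueField (d i (g j)) :=
      hf i (g j)
    simpa [hfg, Matrix.mulVec, dotProduct, mul_comm] using this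

/-- There are elements of `A` whose images generate `𝔭A_𝔭` and form a basis of its cotangent
space. -/
lemma exists_basis_cotangent [IsNoetherianRing A] :
    ∃ (r : ℕ) (g : Fin r → A) (hg : ∀ i, algebraMap A (Localization.AtPrime p) (g i) ∈
        (residueExtension k p).ker) (b : Module.Basis (Fin r) p.ResidueField
          (residueExtension k p).Cotangent),
      p.map (algebraMap A (Localization.AtPrime p)) =
        Ideal.span (Set.range fun i ↦ algebraMap A (Localization.AtPrime p) (g i)) ∧
      ∀ i, b i = Extension.Cotangent.mk ⟨_, hg i⟩ := by
  have hnoeth : IsNoetherianRing (Localization.AtPrime p) :=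
    IsLocalization.isNoetherianRing p.primeCompl _ inferInstance
  have hker : Ideal.span (Set.range fun a : p ↦ algebraMap A (Localization.AtPrime p) a) =
      (residueExtension k p).ker := by
    rw [ker_residueExtension_eq_map, Ideal.map, Set.image_eq_range]
    rfl
  have hfg : (residueExtension k p).ker.FG := IsNoetherian.noetherian _
  have hspan := Extension.Cotangent.span_eq_top_of_span_eq_ker
    (P := residueExtension k p) _ hker
  have hfin := Extension.Cotangent.finite hfg
  obtain ⟨ι, a, -, ha, hli⟩ := exists_linearIndependent' p.ResidueField
    (fun a : p ↦ Extension.Cotangent.mk (P := residueExtension k p)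
      ⟨algebraMap A (Localization.AtPrime p) a, hker.le (Ideal.subset_span ⟨a, rfl⟩)⟩)
  rw [hspan] at ha
  let b := Module.Basis.mk hli ha.ge
  have := Module.Finite.finite_basis b
  let e := Finite.equivFin ι
  refine ⟨Nat.card ι, fun i ↦ a (e.symm i), fun i ↦ hker.le (Ideal.subset_span ⟨_, rfl⟩),
    b.reindex e, ?_, fun i ↦ by simp [b]⟩
  rw [← ker_residueExtension_eq_map k p]
  refine le_antisymm (Submodule.le_of_le_smul_of_le_jacobson_bot
    (I := (residueExtension k p).ker) hfg ?_ ?_) ?_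
  · rw [ker_residueExtension, IsLocalRing.jacobson_eq_maximalIdeal _ bot_ne_top]
  · intro x hx
    -- `y` is the combination of the generators whose coefficients lift the coordinates of `x`.
    choose c hc using fun i ↦ IsLocalRing.residue_surjective
      ((b.reindex e).repr (Extension.Cotangent.mk ⟨x, hx⟩) i)
    let y : (residueExtension k p).ker := ∑ i, c i •
      ⟨algebraMap A (Localization.AtPrime p) (a (e.symm i)),
        hker.le (Ideal.subset_span ⟨_, rfl⟩)⟩
    have hy : Extension.Cotangent.mk ⟨x, hx⟩ = Extension.Cotangent.mk y := by
      rw [← (b.reindex e).sum_repr (Extension.Cotangent.mk ⟨x, hx⟩)]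
      simp only [y, map_sum, map_smul]
      refine Finset.sum_congr rfl fun i _ ↦ ?_
      rw [← hc, ← IsLocalRing.ResidueField.algebraMap_eq, algebraMap_smul]
      simp [b]
    rw [Extension.Cotangent.mk_eq_mk_iff_sub_mem, pow_two] at hy
    refine Submodule.mem_sup.mpr ⟨y, ?_, x - y, hy, by simp⟩
    simp only [y, AddSubmonoidClass.coe_finsetSum, SetLike.val_smul]
    exact sum_mem fun i _ ↦ Ideal.mul_mem_left _ _ (Ideal.subset_span ⟨i, rfl⟩)
  · rw [Ideal.span_le]
    rintro _ ⟨i, rfl⟩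
    exact hker.le (Ideal.subset_span ⟨_, rfl⟩)

end

lemma exists_jacobian_of_injective {k : Type u} [Field k] {n : ℕ}
    (p : Ideal (MvPolynomial (Fin n) k)) [p.IsPrime]
    (h : Function.Injective (residueExtension k p).cotangentComplex) :
    ∃ (r : ℕ) (d : Fin r → Derivation k (MvPolynomial (Fin n) k) (MvPolynomial (Fin n) k))
        (g : Fin r → MvPolynomial (Fin n) k),
        p.map (algebraMap (MvPolynomial (Fin n) k) (Localization.AtPrime p)) =
          Ideal.span (Set.range fun i =>
            algebraMap (MvPolynomial (Fin n) k) (Localization.AtPrime p) (g i)) ∧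
        (Matrix.of fun i j => d i (g j)).det ∉ p := by
  obtain ⟨r, g, hg, b, hspan, hb⟩ := exists_basis_cotangent k p
  obtain ⟨l, hl⟩ := LinearMap.exists_leftInverse_of_injective _ (LinearMap.ker_eq_bot.mpr h)
  -- The derivations `A → κ` dual to the basis `b`.
  let δ (i : Fin r) : Derivation k (MvPolynomial (Fin n) k) p.ResidueField :=
    (((b.coord i ∘ₗ l).restrictScalars (Localization.AtPrime p) ∘ₗ
      TensorProduct.mk (Localization.AtPrime p) p.ResidueField
        Ω[Localization.AtPrime p⁄k] 1).compDer (D k (Localization.AtPrime p))).compAlgebraMap _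
  have hδ (i j) : δ i (g j) = if i = j then 1 else 0 := by
    have := LinearMap.congr_fun hl (b j)
    rw [LinearMap.comp_apply, hb, Extension.cotangentComplex_mk, ← hb] at this
    change b.coord i (l (1 ⊗ₜ D k (Localization.AtPrime p) (algebraMap _ _ (g j)))) = _
    rw [this]
    simp [Finsupp.single_apply, eq_comm]
  -- Clearing denominators lifts a nonzero multiple of `δ i` to a derivation of the polynomial ring.
  have key (i : Fin r) : ∃ (s : MvPolynomial (Fin n) k)
      (d : Derivation k (MvPolynomial (Fin n) k) (MvPolynomial (Fin n) k)),
      s ∉ p ∧ ∀ x, algebraMap _ p.ResidueField (d x) = algebraMap _ p.ResidueField s * δ i x := by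
    obtain ⟨⟨t, ht⟩, hs⟩ := IsLocalization.exist_integer_multiples_of_finite
      (nonZeroDivisors (MvPolynomial (Fin n) k ⧸ p)) (fun j ↦ δ i (MvPolynomial.X j))
    obtain ⟨s, rfl⟩ := Ideal.Quotient.mk_surjective t
    choose c hc using hs
    choose c' hc' using fun j ↦ Ideal.Quotient.mk_surjective (c j)
    refine ⟨s, MvPolynomial.mkDerivation k c', fun h ↦ nonZeroDivisors.ne_zero ht
      (Ideal.Quotient.eq_zero_iff_mem.mpr h), fun x ↦ ?_⟩
    have : (Algebra.linearMap _ p.ResidueField).compDer (MvPolynomial.mkDerivation k c') =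
        s • δ i := by
      apply MvPolynomial.derivation_ext
      intro j
      have := hc j
      rw [← hc'] at this
      simpa [Algebra.smul_def] using this
    simpa [Algebra.smul_def] using DFunLike.congr_fun this x
  choose s d hs hd using key
  refine ⟨r, d, g, hspan, fun hdet ↦ ?_⟩
  rw [← Ideal.algebraMap_residueField_eq_zero, RingHom.map_det, RingHom.mapMatrix_apply] at hdet
  have : (Matrix.of fun i j ↦ d i (g j)).map (algebraMap _ p.ResidueField) =
      Matrix.diagonal fun i ↦ algebraMap _ p.ResidueField (s i) := by
    ext i j
    simp [hd, hδ, Matrix.diagonal_apply]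
  rw [this, Matrix.det_diagonal, Finset.prod_eq_zero_iff] at hdet
  obtain ⟨i, -, hi⟩ := hdet
  exact hs i (Ideal.algebraMap_residueField_eq_zero.mp hi)

/-- Let `k` be a field, `A = k[x₁,…,xₙ]` and `𝔭` a prime of `A` with residue
field `k(𝔭)` (realized as any fraction field `κ` of `A/𝔭`).  Then `k(𝔭)` is formally smooth
over `k` iff there are `r : ℕ`, derivations `d₁,…,d_r ∈ Der_k(A,A)` and `g₁,…,g_r ∈ A` whose
images generate `𝔭A_𝔭` and with `det (dᵢ gⱼ) ∉ 𝔭`. -/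
theorem residueField_formallySmooth_iff_jacobian
    (k : Type u) [Field k] (n : ℕ)
    (p : Ideal (MvPolynomial (Fin n) k)) [p.IsPrime]
    (κ : Type u) [Field κ] [Algebra (MvPolynomial (Fin n) k ⧸ p) κ]
    [IsFractionRing (MvPolynomial (Fin n) k ⧸ p) κ]
    [Algebra k κ] [IsScalarTower k (MvPolynomial (Fin n) k ⧸ p) κ] :
    Algebra.FormallySmooth k κ ↔
     ∃ (r : ℕ) (d : Fin r → Derivation k (MvPolynomial (Fin n) k) (MvPolynomial (Fin n) k))
        (g : Fin r → MvPolynomial (Fin n) k),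
        p.map (algebraMap (MvPolynomial (Fin n) k) (Localization.AtPrime p)) =
          Ideal.span (Set.range fun i =>
            algebraMap (MvPolynomial (Fin n) k) (Localization.AtPrime p) (g i)) ∧
        (Matrix.of fun i j => d i (g j)).det ∉ p := by
  have e := (IsLocalization.algEquiv (nonZeroDivisors (MvPolynomial (Fin n) k ⧸ p)) κ
    p.ResidueField).restrictScalars k
  rw [FormallySmooth.iff_of_equiv e, formallySmooth_residueField_iff_injective]
  exact ⟨exists_jacobian_of_injective p, fun ⟨r, d, g, hg, hd⟩ ↦
    cotangentComplex_injective_of_jacobian k p d g hg hd⟩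
end

section
/- Let k be a field, A = k[x₁,…,xₙ], 𝔭 a prime ideal of A, and s ≥ 2 an integer. Assume the residue field k(𝔭) is formally smooth over k (equivalently, separably generated over k), and that char(k) is either 0 or greater than s. Let d₁,…,d_r ∈ Der_k(A, A) and g₁,…,g_r ∈ 𝔭 be such that the images of the g_i generate 𝔭A_𝔭 and det((d_i(g_j))_{i,j}) ∉ 𝔭. Then for every f ∈ A: the image of f lies in 𝔭^s A_𝔭 if and only if the image of f lies in 𝔭^{s−1} A_𝔭 and, for every i ∈ {1,…,r}, the image of d_i(f) lies in 𝔭^{s−1} A_𝔭. -/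
/-!
Put `I = (g₁,…,g_r)`, so that `I` and `𝔭` have the same extension to `A_𝔭`, and an element of `A`
lies in `𝔭^t A_𝔭` exactly when a multiple of it by some `u ∉ 𝔭` lies in `I ^ t`.

The forward direction is the Leibniz rule: a derivation maps `I ^ (t + 1)` into `I ^ t`.

For the converse, let `M = (dᵢ gⱼ)`, `δ = det M`, and consider the Euler-type derivation
`E = ∑ᵢ gᵢ ∑ₗ adj(M)ᵢₗ dₗ`. Since `adj(M) M = δ`, it satisfies `E gⱼ = δ gⱼ`, and `E A ⊆ I`.
Hence `E x ≡ t δ x` modulo `I ^ (t + 1)` for all `x ∈ I ^ t` (`euler_sub_mem_pow`). Taking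
`t = s - 1`, the hypothesis `dₗ f ∈ 𝔭^t A_𝔭` gives `E f ∈ 𝔭^(t+1) A_𝔭`, so
`t δ f ∈ 𝔭^(t+1) A_𝔭`, and `t δ` is a unit in `A_𝔭` by the assumptions on the determinant and the
characteristic.
-/

universe u

theorem derivation_sum_apply {k A ι : Type*} [CommRing k] [CommRing A] [Algebra k A]
    (S : Finset ι) (D : ι → Derivation k A A) (x : A) : (∑ i ∈ S, D i) x = ∑ i ∈ S, D i x := by
  have := map_sum (Derivation.coeFnAddMonoidHom (R := k) (A := A) (M := A)) D S
  exact (congrFun this x).trans (Finset.sum_apply _ _ _)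

theorem derivation_mem_pow {k A : Type*} [CommRing k] [CommRing A] [Algebra k A]
    (D : Derivation k A A) (I : Ideal A) (t : ℕ) :
    ∀ x ∈ I ^ (t + 1), D x ∈ I ^ t := by
  induction t with
  | zero => intro x _; simp
  | succ t ih =>
    intro x hx
    rw [pow_succ] at hx
    refine Submodule.mul_induction_on hx (fun a ha b hb => ?_) (fun a b ha hb => ?_)
    · rw [D.leibniz, smul_eq_mul, smul_eq_mul]
      refine add_mem (Ideal.mul_mem_right _ _ ha) ?_
      rw [pow_succ, mul_comm b]
      exact Ideal.mul_mem_mul (ih a ha) hb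
    · rw [map_add]
      exact add_mem ha hb

/-- A derivation with image in `I = (gⱼ)` that scales each generator `gⱼ` by `δ` acts on
`I ^ t / I ^ (t + 1)` as multiplication by `t δ`. -/
theorem euler_sub_mem_pow {k A ι : Type*} [CommRing k] [CommRing A] [Algebra k A]
    (E : Derivation k A A) (g : ι → A) (δ : A)
    (hE : ∀ x, E x ∈ Ideal.span (Set.range g)) (hg : ∀ j, E (g j) = δ * g j) (t : ℕ) :
    ∀ x ∈ Ideal.span (Set.range g) ^ t,
      E x - t * δ * x ∈ Ideal.span (Set.range g) ^ (t + 1) := by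
  have h1 : ∀ x ∈ Ideal.span (Set.range g), E x - δ * x ∈ Ideal.span (Set.range g) ^ 2 := by
    intro x hx
    induction hx using Submodule.span_induction with
    | mem x hx =>
      obtain ⟨j, rfl⟩ := hx
      simp [hg]
    | zero => simp
    | add x y _ _ hx hy =>
      have := add_mem hx hy
      rw [map_add]
      convert this using 1
      ring
    | smul a x hx ih =>
      have h2 : x * E a ∈ Ideal.span (Set.range g) ^ 2 := by
        rw [pow_two]
        exact Ideal.mul_mem_mul hx (hE a)
      have := add_mem (Ideal.mul_mem_left _ a ih) h2
      convert this using 1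
      simp only [smul_eq_mul, Derivation.leibniz]
      ring
  induction t with
  | zero => intro x _; simpa using hE x
  | succ t ih =>
    intro x hx
    rw [pow_succ] at hx
    refine Submodule.mul_induction_on hx (fun a ha b hb => ?_) (fun a b ha hb => ?_)
    · have e1 := Ideal.mul_mem_mul (ih a ha) hb
      have e2 := Ideal.mul_mem_mul ha (h1 b hb)
      rw [← pow_succ] at e1
      rw [← pow_add] at e2
      convert add_mem e1 e2 using 1
      simp only [smul_eq_mul, Derivation.leibniz]
      push_cast
      ring
    · convert add_mem ha hb using 1
      rw [map_add]
      ring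

/-- Membership in an extended power `(I A_𝔭) ^ t`, with denominators cleared. -/
theorem algebraMap_mem_map_pow_iff {A : Type*} [CommRing A] (p : Ideal A) [p.IsPrime]
    (I : Ideal A) (t : ℕ) (x : A) :
    algebraMap A (Localization.AtPrime p) x ∈
        (I.map (algebraMap A (Localization.AtPrime p))) ^ t ↔ ∃ u ∉ p, u * x ∈ I ^ t := by
  rw [← Ideal.map_pow, IsLocalization.algebraMap_mem_map_algebraMap_iff p.primeCompl]
  rfl

/-- Let `A = k[x₁,…,xₙ]`, `𝔭` a prime of `A` with separably generated
(= formally smooth) residue field `k(𝔭)`, `s ≥ 2`, and `char k = 0` or `char k > s`.  Given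
`d₁,…,d_r ∈ Der_k(A,A)` and `g₁,…,g_r ∈ 𝔭` whose images generate `𝔭A_𝔭` with
`det (dᵢ gⱼ) ∉ 𝔭`, we have for every `f ∈ A`:
`f ∈ 𝔭^s A_𝔭` iff `f ∈ 𝔭^{s-1} A_𝔭` and `dᵢ f ∈ 𝔭^{s-1} A_𝔭` for all `i`. -/
theorem mem_pow_iff_mem_pow_pred_and_derivation
    (k : Type u) [Field k] (n : ℕ)
    (p : Ideal (MvPolynomial (Fin n) k)) [p.IsPrime]
    (s : ℕ) (hs : 2 ≤ s)
    (κ : Type u) [Field κ] [Algebra (MvPolynomial (Fin n) k ⧸ p) κ]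
    [IsFractionRing (MvPolynomial (Fin n) k ⧸ p) κ]
    [Algebra k κ] [IsScalarTower k (MvPolynomial (Fin n) k ⧸ p) κ]
    (hfs : Algebra.FormallySmooth k κ)
    (hchar : ringChar k = 0 ∨ s < ringChar k)
    (r : ℕ) (d : Fin r → Derivation k (MvPolynomial (Fin n) k) (MvPolynomial (Fin n) k))
    (g : Fin r → MvPolynomial (Fin n) k) (hg : ∀ i, g i ∈ p)
    (hgen : p.map (algebraMap (MvPolynomial (Fin n) k) (Localization.AtPrime p)) =
      Ideal.span (Set.range fun i =>
        algebraMap (MvPolynomial (Fin n) k) (Localization.AtPrime p) (g i)))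
    (hdet : (Matrix.of fun i j => d i (g j)).det ∉ p) :
    ∀ f : MvPolynomial (Fin n) k,
      algebraMap (MvPolynomial (Fin n) k) (Localization.AtPrime p) f ∈
          (p.map (algebraMap (MvPolynomial (Fin n) k) (Localization.AtPrime p))) ^ s ↔
        (algebraMap (MvPolynomial (Fin n) k) (Localization.AtPrime p) f ∈
            (p.map (algebraMap (MvPolynomial (Fin n) k) (Localization.AtPrime p))) ^ (s - 1) ∧
          ∀ i, algebraMap (MvPolynomial (Fin n) k) (Localization.AtPrime p) (d i f) ∈
            (p.map (algebraMap (MvPolynomial (Fin n) k) (Localization.AtPrime p))) ^ (s - 1)) := by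
  intro f
  have hmap : p.map (algebraMap (MvPolynomial (Fin n) k) (Localization.AtPrime p)) =
      (Ideal.span (Set.range g)).map
        (algebraMap (MvPolynomial (Fin n) k) (Localization.AtPrime p)) := by
    rw [hgen, Ideal.map_span, ← Set.range_comp]
    rfl
  obtain ⟨t, rfl⟩ : ∃ t, s = t + 1 := ⟨s - 1, by omega⟩
  rw [hmap, Nat.add_sub_cancel]
  simp only [algebraMap_mem_map_pow_iff]
  set I := Ideal.span (Set.range g) with hI
  constructor
  · rintro ⟨u, hu, huf⟩
    refine ⟨⟨u, hu, Ideal.pow_le_pow_right (Nat.le_succ t) huf⟩, fun i => ⟨u * u, ?_, ?_⟩⟩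
    · exact fun h => hu ((Ideal.IsPrime.mem_or_mem ‹_› h).elim id id)
    · have h1 := Ideal.mul_mem_left _ u (derivation_mem_pow (d i) I t _ huf)
      have h2 := Ideal.mul_mem_right (d i u) _ (Ideal.pow_le_pow_right (Nat.le_succ t) huf)
      convert sub_mem h1 h2 using 1
      simp only [smul_eq_mul, Derivation.leibniz]
      ring
  · rintro ⟨⟨u, hu, huf⟩, hd⟩
    choose v hv hvf using hd
    set M : Matrix (Fin r) (Fin r) (MvPolynomial (Fin n) k) := Matrix.of fun i j => d i (g j) with hM
    let E : Derivation k (MvPolynomial (Fin n) k) (MvPolynomial (Fin n) k) :=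
      ∑ i, g i • ∑ l, M.adjugate i l • d l
    have hEx : ∀ x, E x = ∑ i, g i * ∑ l, M.adjugate i l * d l x := by
      intro x
      simp only [E, derivation_sum_apply, Derivation.coe_smul, Pi.smul_apply,
        smul_eq_mul]
    have hEI : ∀ x, E x ∈ I := by
      intro x
      rw [hEx]
      exact sum_mem fun i _ => Ideal.mul_mem_right _ _ (Ideal.subset_span ⟨i, rfl⟩)
    have hEg : ∀ j, E (g j) = M.det * g j := by
      intro j
      have h : ∀ i, ∑ l, M.adjugate i l * d l (g j) = if i = j then M.det else 0 := by
        intro i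
        have := congrFun (congrFun M.adjugate_mul i) j
        rw [Matrix.mul_apply] at this
        simpa [Matrix.one_apply, hM] using this
      rw [hEx]
      simp only [h]
      simp [mul_comm]
    have key := euler_sub_mem_pow E g M.det hEI hEg t _ huf
    -- `V` is a common denominator for all the `dₗ f`.
    let V : MvPolynomial (Fin n) k := ∏ l, v l
    have hV : V ∉ p := fun h => by
      obtain ⟨l, -, hl⟩ := (Ideal.IsPrime.prod_mem_iff (p := p)).1 h
      exact hv l hl
    have hVE : V * E f ∈ I ^ (t + 1) := by
      rw [hEx, Finset.mul_sum]
      refine sum_mem fun i _ => ?_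
      rw [mul_left_comm, Finset.mul_sum, pow_succ']
      refine Ideal.mul_mem_mul (Ideal.subset_span ⟨i, rfl⟩) (sum_mem fun l _ => ?_)
      rw [mul_left_comm]
      refine Ideal.mul_mem_left _ _ ?_
      obtain ⟨w, hw⟩ := Finset.dvd_prod_of_mem v (Finset.mem_univ l)
      change (∏ l, v l) * _ ∈ _
      rw [hw, mul_right_comm]
      exact Ideal.mul_mem_right _ _ (hvf l)
    have ht : (t : k) ≠ 0 := by
      intro h
      have hdvd := (ringChar.spec k t).1 h
      rcases hchar with h0 | h0
      · rw [h0, zero_dvd_iff] at hdvd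
        omega
      · have := Nat.le_of_dvd (by omega) hdvd
        omega
    have htp : (t : (MvPolynomial (Fin n) k)) ∉ p := by
      intro h
      refine (inferInstance : p.IsPrime).ne_top (Ideal.eq_top_of_isUnit_mem _ h ?_)
      have := (IsUnit.mk0 _ ht).map (algebraMap k (MvPolynomial (Fin n) k))
      rwa [map_natCast] at this
    refine ⟨t * M.det * u * u * V, ?_, ?_⟩
    · simp only [Ideal.IsPrime.mul_mem_iff_mem_or_mem, not_or]
      exact ⟨⟨⟨⟨htp, hdet⟩, hu⟩, hu⟩, hV⟩
    · -- Multiply `E (u f) = u E f + f E u` by `u V`; the last term is in `I ^ t * I`.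
      have h1 := Ideal.mul_mem_left _ (u * V) key
      have h2 := Ideal.mul_mem_left _ (u * u) hVE
      have h3 := Ideal.mul_mem_left _ V (Ideal.mul_mem_mul huf (hEI u))
      rw [← pow_succ] at h3
      convert sub_mem (add_mem h2 h3) h1 using 1
      simp only [smul_eq_mul, Derivation.leibniz]
      ring
end

section
/- Let k be a field, B a k-algebra of finite type, 𝔭 a prime ideal of B, and s ∈ ℕ with s ≥ 1. Assume the residue field k(𝔭) is formally smooth over k (equivalently, separably generated over k), and that char(k) is either 0 or greater than s. Then there exists a ∈ B with a ∉ 𝔭 such that, in the localization B_a, the ideal 𝔭^s B_a equals the intersection of the ideals 𝔪^s B_a over all maximal ideals 𝔪 of B containing 𝔭 whose residue field k(𝔪) is separable over k. -/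
/-!
Since `κ = k(𝔭)` is formally smooth over `k` and the smooth locus is open, `S = B[1/a₀]` has
`A = S ⧸ q` smooth over `k`, where `q = 𝔭 S`, for some `a₀ ∉ 𝔭`. Put `C = S ⧸ q ^ s`. As
`C → A` is surjective with nilpotent kernel `N`, `N ^ s = 0`, smoothness gives a `k`-algebra
section `σ : A → C`, which makes `C` a finite `A`-algebra. A closed point `𝔪 ⊇ q` of `S`
corresponds to a maximal ideal `n` of `A`, with `𝔪 C = n C + N`, hence
`𝔪 ^ s C ⊆ n C + N ^ s = n C`.

After inverting some nonzero element of `A` the module `C` is free, so the intersection of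
the `n C` over a family of maximal ideals `n` with zero intersection vanishes
(`exists_ne_zero_forall_pow_smul_eq_zero`). The closed points with separable residue field
form such a family, because a nonzero smooth `k`-algebra always has one
(`exists_isMaximal_isSeparable`). Thus the intersection of the `𝔪 ^ s` is contained in `q ^ s` after
inverting one element outside `q` (`exists_pow_mul_mem_of_smooth`), and clearing denominators
gives the claim over `B`.
-/

universe u

/-- Closed points with separable residue field pull back to such points: the residue field of the
pull-back embeds in a separable algebraic extension, and a domain integral over a field is a
field. -/
lemma comap_isMaximal_isSeparable {k A C : Type*} [Field k] [CommRing A] [CommRing C]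
    [Algebra k A] [Algebra k C] (f : A →ₐ[k] C) (n : Ideal C) [n.IsPrime]
    [Algebra.IsSeparable k (C ⧸ n)] :
    (n.comap f).IsMaximal ∧ Algebra.IsSeparable k (A ⧸ n.comap f) := by
  let g : (A ⧸ n.comap f) →ₐ[k] (C ⧸ n) := Ideal.quotientMapₐ n f le_rfl
  have hg : Function.Injective g := Ideal.quotientMap_injective
  have hsep : Algebra.IsSeparable k (A ⧸ n.comap f) := ⟨fun x ↦ by
    have := Algebra.IsSeparable.isSeparable k (g x)
    rwa [IsSeparable, minpoly.algHom_eq g hg] at this⟩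
  refine ⟨?_, hsep⟩
  have : Algebra.IsIntegral k (A ⧸ n.comap f) := ⟨hsep.isIntegral⟩
  exact Ideal.Quotient.maximal_of_isField _
    (isField_of_isIntegral_of_isField' (Field.toIsField k))

/-- A nonzero smooth algebra over a field has a closed point with separable residue field. Over a
finite field every closed point will do. Over an infinite field, étale coordinates map a nonempty
open part of the spectrum to affine space with open image; the image contains a rational point, and
the residue field of a closed point above it is unramified over `k`. -/
lemma exists_isMaximal_isSeparable (k A : Type u) [Field k] [CommRing A] [Nontrivial A]
    [Algebra k A] [Algebra.Smooth k A] :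
    ∃ n : Ideal A, n.IsMaximal ∧ Algebra.IsSeparable k (A ⧸ n) := by
  obtain ⟨p, hp⟩ := Ideal.exists_maximal A
  cases finite_or_infinite k with
  | inl hfin =>
    refine ⟨p, hp, ?_⟩
    let := Ideal.Quotient.field p
    have : Module.Finite k (A ⧸ p) := finite_of_finite_type_of_isJacobsonRing k (A ⧸ p)
    infer_instance
  | inr hinf =>
    have : Algebra.IsSmoothAt k p := by
      have := Algebra.smoothLocus_eq_univ (R := k) (A := A)
      exact (this.symm.le (Set.mem_univ (⟨p, hp.isPrime⟩ : PrimeSpectrum A)) :)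
    obtain ⟨f, hf, N, _, _, _⟩ :=
      Algebra.IsSmoothAt.exists_isStandardEtale_mvPolynomial (R := k) (p := p)
    set T := Localization.Away f
    let R := MvPolynomial (Fin N) k
    have : Nontrivial T := by
      refine not_subsingleton_iff_nontrivial.mp fun h ↦ ?_
      obtain ⟨j, hj⟩ := (IsLocalization.subsingleton_iff (S := T) (M := .powers f)).mp h
      exact hf (hp.isPrime.mem_of_pow_mem j (by simp [show f ^ j = 0 from hj]))
    have hopen : IsOpen (Set.range (PrimeSpectrum.comap (algebraMap R T))) :=
      (PrimeSpectrum.isOpenMap_comap_of_hasGoingDown_of_finitePresentation (R := R)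
        (S := T)).isOpen_range
    obtain ⟨t⟩ : Nonempty (PrimeSpectrum T) := inferInstance
    obtain ⟨_, ⟨_, ⟨h, rfl⟩, rfl⟩, hxh, hh⟩ :=
      PrimeSpectrum.isBasis_basic_opens.exists_subset_of_mem_open
        (Set.mem_range_self (f := PrimeSpectrum.comap (algebraMap R T)) t) hopen
    have hh0 : h ≠ 0 := by
      rintro rfl
      simp at hxh
    obtain ⟨c, hc⟩ : ∃ c : Fin N → k, MvPolynomial.eval c h ≠ 0 := by
      by_contra! H
      exact hh0 (MvPolynomial.funext fun c ↦ by simpa using H c)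
    let ev : R →+* k := MvPolynomial.eval c
    have hev : (RingHom.ker ev).IsPrime := RingHom.ker_isPrime ev
    obtain ⟨P, hP⟩ := hh (show (⟨RingHom.ker ev, hev⟩ : PrimeSpectrum R) ∈ _ from hc)
    obtain ⟨n, hn, hPn⟩ := Ideal.exists_le_maximal P.asIdeal P.2.ne_top
    have hle : RingHom.ker ev ≤ n.comap (algebraMap R T) := by
      have : P.asIdeal.comap (algebraMap R T) = RingHom.ker ev := congr_arg (·.asIdeal) hP
      rw [← this]
      exact Ideal.comap_mono hPn
    let := Ideal.Quotient.field n
    -- `k` becomes an `R`-algebra through the rational point `c`, and `R → T ⧸ n` factors through it.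
    let : Algebra R k := ev.toAlgebra
    have : IsScalarTower R k (T ⧸ n) := by
      refine IsScalarTower.of_algebraMap_eq fun r ↦ ?_
      have h1 : r - MvPolynomial.C (ev r) ∈ RingHom.ker ev := by
        rw [RingHom.mem_ker, map_sub, sub_eq_zero]
        exact (MvPolynomial.eval_C _).symm
      have h2 := Ideal.Quotient.eq_zero_iff_mem.mpr (Ideal.mem_comap.mp (hle h1))
      rw [map_sub, map_sub, sub_eq_zero] at h2
      refine h2.trans ?_
      rw [IsScalarTower.algebraMap_apply k T (T ⧸ n),
        IsScalarTower.algebraMap_apply k R T]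
      rfl
    have : Algebra.FormallyUnramified T (T ⧸ n) :=
      .of_surjective (Algebra.ofId T (T ⧸ n)) Ideal.Quotient.mk_surjective
    have : Algebra.FormallyUnramified R (T ⧸ n) := .comp R T _
    have : Algebra.FormallyUnramified k (T ⧸ n) := .of_restrictScalars R k _
    have : Algebra.FiniteType k (T ⧸ n) :=
      .trans (S := T) (.trans (S := R) inferInstance inferInstance) inferInstance
    have : Algebra.IsSeparable k (T ⧸ n) := Algebra.FormallyUnramified.isSeparable k _
    exact ⟨_, comap_isMaximal_isSeparable (IsScalarTower.toAlgHom k A T) n⟩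

lemma sup_pow_le_sup {R : Type*} [CommRing R] (I N : Ideal R) (s : ℕ) :
    (I ⊔ N) ^ s ≤ I ⊔ N ^ s := by
  induction s with
  | zero => simp
  | succ s ih =>
    rw [pow_succ]
    refine (Ideal.mul_mono_left ih).trans ?_
    rw [Ideal.sup_mul, Ideal.mul_sup (N ^ s), ← pow_succ]
    have h1 : I * (I ⊔ N) ≤ I := Ideal.mul_le_left
    have h2 : N ^ s * I ≤ I := Ideal.mul_le_right
    exact sup_le (h1.trans le_sup_left) (sup_le (h2.trans le_sup_left) le_sup_right)

/-- Generic freeness turns density of a family of primes of `A` into a statement on a finite module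
`M`: for `r` such that `M` is free after inverting `r`, an element of `n M` for all members `n` of
the family with `r ∉ n` has coordinates lying in all those `n`, so it dies in `M[1/r]`. -/
lemma exists_ne_zero_forall_pow_smul_eq_zero (A M : Type*) [CommRing A] [IsDomain A]
    [IsNoetherianRing A] [AddCommGroup M] [Module A M] [Module.Finite A M] (P : Ideal A → Prop)
    (hP : ∀ n, P n → n.IsPrime) (hd : ∀ g, g ≠ 0 → ∃ n, P n ∧ g ∉ n) :
    ∃ r : A, r ≠ 0 ∧ ∀ x : M, (∀ n, P n → r ∉ n → x ∈ n • (⊤ : Submodule A M)) →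
      ∃ N : ℕ, r ^ N • x = 0 := by
  have : Module.FinitePresentation A M := Module.finitePresentation_of_finite A M
  obtain ⟨r, hr, hfree, -⟩ := Module.FinitePresentation.exists_free_localizedModule_powers
    (nonZeroDivisors A) (LocalizedModule.mkLinearMap (nonZeroDivisors A) M) (FractionRing A)
  have hr0 := nonZeroDivisors.ne_zero hr
  refine ⟨r, hr0, fun x hx ↦ ?_⟩
  let Ar := Localization (Submonoid.powers r)
  let b := Module.Free.chooseBasis Ar (LocalizedModule.Away r M)
  let ι := LocalizedModule.mkLinearMap (Submonoid.powers r) M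
  have key : ι x = 0 := by
    refine b.repr.map_eq_zero_iff.mp (Finsupp.ext fun i ↦ ?_)
    obtain ⟨a, t, hat⟩ := IsLocalization.exists_mk'_eq (Submonoid.powers r) (b.repr (ι x) i)
    rw [← hat]
    suffices a = 0 by simp [this]
    by_contra ha
    obtain ⟨n, hn, hran⟩ := hd (r * a) (mul_ne_zero hr0 ha)
    have hnp := hP n hn
    have hrn : r ∉ n := fun h ↦ hran (n.mul_mem_right _ h)
    have han : a ∉ n := fun h ↦ hran (n.mul_mem_left _ h)
    let φ : M →ₗ[A] Ar := ((b.coord i).restrictScalars A) ∘ₗ ι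
    have h1 : φ x ∈ n.map (algebraMap A Ar) := by
      refine Submodule.smul_induction_on (hx n hn hrn) (fun y hy m _ ↦ ?_) fun y z hy hz ↦ ?_
      · rw [map_smul, Algebra.smul_def]
        exact Ideal.mul_mem_right _ _ (Ideal.mem_map_of_mem _ hy)
      · rw [map_add]
        exact add_mem hy hz
    have h2 : φ x = IsLocalization.mk' Ar a t := hat.symm
    rw [h2, IsLocalization.mk'_mem_map_algebraMap_iff] at h1
    obtain ⟨_, ⟨j, rfl⟩, hj⟩ := h1
    exact (hnp.mem_or_mem hj).elim (fun h ↦ hrn (hnp.mem_of_pow_mem _ h)) han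
  obtain ⟨⟨_, N, rfl⟩, hN⟩ := (IsLocalizedModule.eq_zero_iff (Submonoid.powers r) ι).mp key
  exact ⟨N, hN⟩

/-- Closed points with separable residue field are dense in the spectrum of a smooth domain. -/
lemma exists_isPrime_isSeparable_notMem (k A : Type u) [Field k] [CommRing A] [IsDomain A]
    [Algebra k A] [Algebra.Smooth k A] (g : A) (hg : g ≠ 0) :
    ∃ n : Ideal A, (n.IsPrime ∧ Algebra.IsSeparable k (A ⧸ n)) ∧ g ∉ n := by
  have : Nontrivial (Localization.Away g) := by
    refine not_subsingleton_iff_nontrivial.mp fun h ↦ ?_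
    obtain ⟨j, hj⟩ := (IsLocalization.subsingleton_iff (S := Localization.Away g) (M := .powers g)).mp h
    exact hg (eq_zero_of_pow_eq_zero hj)
  have : Algebra.Smooth A (Localization.Away g) := .of_isLocalization_Away g
  have : Algebra.Smooth k (Localization.Away g) := .comp k A _
  obtain ⟨n, hn, hsep⟩ := exists_isMaximal_isSeparable k (Localization.Away g)
  have := comap_isMaximal_isSeparable (IsScalarTower.toAlgHom k A (Localization.Away g)) n
  refine ⟨_, ⟨this.1.isPrime, this.2⟩, fun h ↦ hn.ne_top ?_⟩
  exact Ideal.eq_top_of_isUnit_mem _ h (IsLocalization.Away.algebraMap_isUnit g)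

/-- The case where `S ⧸ q` is already smooth over `k`: an element lying in `m ^ s` for all closed
points `m ⊇ q` with separable residue field and `d ∉ m` lies in `q ^ s` after inverting `d`. -/
lemma exists_pow_mul_mem_of_smooth (k S : Type u) [Field k] [CommRing S] [Algebra k S]
    [Algebra.FiniteType k S] (q : Ideal S) [q.IsPrime] [Algebra.Smooth k (S ⧸ q)]
    (s : ℕ) (hs : 1 ≤ s) :
    ∃ d : S, d ∉ q ∧ ∀ x : S, (∀ m : Ideal S, m.IsMaximal → q ≤ m →
      Algebra.IsSeparable k (S ⧸ m) → d ∉ m → x ∈ m ^ s) → ∃ N : ℕ, d ^ N * x ∈ q ^ s := by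
  let A := S ⧸ q
  let C := S ⧸ q ^ s
  let π : C →ₐ[k] A := Ideal.Quotient.factorₐ k (Ideal.pow_le_self (by omega))
  have hπ (y : S) : π (Ideal.Quotient.mk _ y) = Ideal.Quotient.mk _ y := rfl
  have hπsurj : Function.Surjective π := Ideal.Quotient.factor_surjective (Ideal.pow_le_self (by omega))
  have hker : RingHom.ker π ^ s = ⊥ := by
    have : RingHom.ker π = q.map (Ideal.Quotient.mk (q ^ s)) := by
      ext c
      obtain ⟨y, rfl⟩ := Ideal.Quotient.mk_surjective c
      rw [RingHom.mem_ker, hπ, Ideal.Quotient.eq_zero_iff_mem, Ideal.mem_quotient_iff_mem]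
      exact Ideal.pow_le_self (by omega)
    rw [this, ← Ideal.map_pow, Ideal.map_quotient_self]
  -- A section of `π`, from smoothness of `A`; it makes `C` a finite `A`-algebra.
  let σ : A →ₐ[k] C := Algebra.FormallySmooth.liftOfSurjective (AlgHom.id k A) π hπsurj ⟨s, hker⟩
  have hσ (y : A) : π (σ y) = y :=
    Algebra.FormallySmooth.liftOfSurjective_apply (AlgHom.id k A) π hπsurj ⟨s, hker⟩ y
  have hnil (c : C) : (c - σ (π c)) ^ s = 0 := by
    have : c - σ (π c) ∈ RingHom.ker π := by rw [RingHom.mem_ker, map_sub, hσ, sub_self]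
    have := Ideal.pow_mem_pow this s
    rwa [hker] at this
  let _ : Algebra A C := σ.toAlgebra
  have : IsScalarTower k A C := .of_algebraMap_eq' σ.comp_algebraMap.symm
  have : Algebra.FiniteType A C := .of_restrictScalars_finiteType k A C
  have : Algebra.IsIntegral A C := by
    refine ⟨fun c ↦ ?_⟩
    have h1 : IsIntegral A (c - σ (π c)) :=
      ⟨Polynomial.X ^ s, Polynomial.monic_X_pow s, by simpa using hnil c⟩
    have h2 : IsIntegral A (σ (π c)) := isIntegral_algebraMap (x := π c)
    simpa using h1.add h2
  have : Module.Finite A C := Algebra.IsIntegral.finite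
  have : IsNoetherianRing A := Algebra.FiniteType.isNoetherianRing k A
  obtain ⟨r, hr0, hr⟩ := exists_ne_zero_forall_pow_smul_eq_zero A C
    (fun n ↦ n.IsPrime ∧ Algebra.IsSeparable k (A ⧸ n)) (fun _ h ↦ h.1)
    (exists_isPrime_isSeparable_notMem k A)
  obtain ⟨d, rfl⟩ := Ideal.Quotient.mk_surjective r
  refine ⟨d, fun h ↦ hr0 (Ideal.Quotient.eq_zero_iff_mem.mpr h), fun x hx ↦ ?_⟩
  obtain ⟨N, hN⟩ := hr (Ideal.Quotient.mk _ x) fun n ⟨hn, hsep⟩ hdn ↦ by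
    obtain ⟨hmax, hmsep⟩ := comap_isMaximal_isSeparable (Ideal.Quotient.mkₐ k q) n
    have hxm := hx _ hmax (fun y hy ↦ by
      rw [Ideal.mem_comap]
      convert n.zero_mem
      exact Ideal.Quotient.eq_zero_iff_mem.mpr hy) hmsep hdn
    -- In `C` the closed point is `n C + ker π`, and `(n C + ker π) ^ s ⊆ n C + (ker π) ^ s = n C`.
    have h1 : (n.comap (Ideal.Quotient.mkₐ k q)).map (Ideal.Quotient.mk (q ^ s)) ≤
        n.map (algebraMap A C) ⊔ RingHom.ker π := by
      rw [Ideal.map_le_iff_le_comap]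
      intro y hy
      rw [Ideal.mem_comap]
      have h3 : Ideal.Quotient.mk (q ^ s) y = σ (π (Ideal.Quotient.mk (q ^ s) y)) +
        (Ideal.Quotient.mk (q ^ s) y - σ (π (Ideal.Quotient.mk (q ^ s) y))) := by ring
      rw [h3]
      refine Ideal.add_mem _ (Ideal.mem_sup_left (Ideal.mem_map_of_mem (algebraMap A C) hy))
        (Ideal.mem_sup_right ?_)
      rw [RingHom.mem_ker, map_sub, hσ, sub_self]
    have h2 := Ideal.mem_map_of_mem (Ideal.Quotient.mk (q ^ s)) hxm
    rw [Ideal.map_pow] at h2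
    have h4 := sup_pow_le_sup _ _ _ (Ideal.pow_right_mono h1 s h2)
    rw [hker, sup_bot_eq] at h4
    rw [Ideal.smul_top_eq_map]
    exact h4
  -- `d` and `σ d` differ by a nilpotent element of `C`, so inverting one inverts the other.
  have hdvd : σ (Ideal.Quotient.mk q d) ∣ (Ideal.Quotient.mk (q ^ s) d) ^ s := by
    have := sub_dvd_pow_sub_pow (Ideal.Quotient.mk (q ^ s) d)
      (Ideal.Quotient.mk (q ^ s) d - σ (π (Ideal.Quotient.mk (q ^ s) d))) s
    rwa [hnil, sub_zero, sub_sub_cancel, hπ] at this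
  refine ⟨s * N, ?_⟩
  rw [← Ideal.Quotient.eq_zero_iff_mem, map_mul, map_pow, pow_mul]
  obtain ⟨e, he⟩ := pow_dvd_pow_of_dvd hdvd N
  rw [Algebra.smul_def, map_pow] at hN
  rw [he, mul_right_comm]
  convert zero_mul e
  exact hN

/-- Let `B` be a `k`-algebra of finite type, `𝔭` a prime of `B` with
separably generated (= formally smooth) residue field `k(𝔭)`, `s ≥ 1`, and `char k = 0` or
`char k > s`.  Then there exists `a ∉ 𝔭` such that in `B_a` the ideal `𝔭^s B_a` is the
intersection of the ideals `𝔪^s B_a` over all maximal `𝔪 ⊇ 𝔭` with `k(𝔪)/k` separable. -/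
theorem pow_eq_iInf_pow_maximal_separable
    (k B : Type u) [Field k] [CommRing B] [Algebra k B] [Algebra.FiniteType k B]
    (p : Ideal B) [p.IsPrime] (s : ℕ) (hs : 1 ≤ s)
    (κ : Type u) [Field κ] [Algebra (B ⧸ p) κ] [IsFractionRing (B ⧸ p) κ]
    [Algebra k κ] [IsScalarTower k (B ⧸ p) κ]
    (hfs : Algebra.FormallySmooth k κ)
    (hchar : ringChar k = 0 ∨ s < ringChar k) :
    ∃ a : B, a ∉ p ∧
      (p.map (algebraMap B (Localization.Away a))) ^ s =
        ⨅ m ∈ {m : Ideal B | m.IsMaximal ∧ p ≤ m ∧ Algebra.IsSeparable k (B ⧸ m)},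
          (m.map (algebraMap B (Localization.Away a))) ^ s := by
  have hsm : Algebra.IsSmoothAt k (⊥ : Ideal (B ⧸ p)) := by
    have hc : (⊥ : Ideal (B ⧸ p)).primeCompl = nonZeroDivisors (B ⧸ p) := by
      ext x
      simp [Ideal.primeCompl]
    have : IsLocalization (⊥ : Ideal (B ⧸ p)).primeCompl κ := by rw [hc]; infer_instance
    exact .of_equiv ((IsLocalization.algEquiv (⊥ : Ideal (B ⧸ p)).primeCompl κ
      (Localization.AtPrime (⊥ : Ideal (B ⧸ p)))).restrictScalars k)
  have : Algebra.FinitePresentation k (B ⧸ p) :=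
    Algebra.FinitePresentation.of_finiteType.mp inferInstance
  obtain ⟨f, hf, hsmooth⟩ := Algebra.IsSmoothAt.exists_notMem_smooth (R := k) (⊥ : Ideal (B ⧸ p))
  obtain ⟨a₀, rfl⟩ := Ideal.Quotient.mk_surjective f
  have ha₀ : a₀ ∉ p := fun h ↦ hf (Ideal.Quotient.eq_zero_iff_mem.mpr h)
  let S := Localization.Away a₀
  let q := p.map (algebraMap B S)
  have hdisj : Disjoint (Submonoid.powers a₀ : Set B) p :=
    (Ideal.disjoint_powers_iff_notMem_of_isPrime _).mpr ha₀
  have hq : q.IsPrime := IsLocalization.isPrime_of_isPrime_disjoint (.powers a₀) _ _ ‹_› hdisj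
  have hqp : q.comap (algebraMap B S) = p :=
    IsLocalization.under_map_of_isPrime_disjoint (.powers a₀) S ‹_› hdisj
  have : Algebra.Smooth k (S ⧸ q) := by
    have h1 : IsLocalization (Algebra.algebraMapSubmonoid (B ⧸ p) (.powers a₀)) (S ⧸ q) :=
      inferInstance
    rw [Algebra.algebraMapSubmonoid_powers] at h1
    have : IsScalarTower k (B ⧸ p) (S ⧸ q) := by
      refine .of_algebraMap_eq fun c ↦ ?_
      rw [IsScalarTower.algebraMap_apply k S (S ⧸ q), IsScalarTower.algebraMap_apply k B S]
      rfl
    exact .of_equiv ((IsLocalization.algEquiv (.powers (Ideal.Quotient.mk p a₀))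
      (Localization.Away (Ideal.Quotient.mk p a₀)) (S ⧸ q)).restrictScalars k)
  have : Algebra.FiniteType k S := .trans (S := B) inferInstance inferInstance
  obtain ⟨d, hd, H⟩ := exists_pow_mul_mem_of_smooth k S q s hs
  obtain ⟨d₁, t, rfl⟩ := IsLocalization.exists_mk'_eq (Submonoid.powers a₀) d
  have hd₁ : d₁ ∉ p := fun h ↦ hd
    ((IsLocalization.mk'_mem_map_algebraMap_iff (.powers a₀) S _ _ _).mpr ⟨1, one_mem _, by simpa⟩)
  have ha : a₀ * d₁ ∉ p := fun h ↦ (‹p.IsPrime›.mem_or_mem h).elim ha₀ hd₁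
  refine ⟨a₀ * d₁, ha, le_antisymm ?_ ?_⟩
  · exact le_iInf₂ fun m hm ↦ Ideal.pow_right_mono (Ideal.map_mono hm.2.1) s
  intro y hy
  obtain ⟨b, u, rfl⟩ := IsLocalization.exists_mk'_eq (Submonoid.powers (a₀ * d₁)) y
  -- Powers of maximal ideals are primary, so the denominators from `B_a` can be dropped.
  have hb (m : Ideal B) (hm : m.IsMaximal) (hpm : p ≤ m) (hsep : Algebra.IsSeparable k (B ⧸ m))
      (ham : a₀ * d₁ ∉ m) : b ∈ m ^ s := by
    have h1 := iInf₂_le (f := fun (m : Ideal B) (_ : m ∈ {m : Ideal B | m.IsMaximal ∧ p ≤ m ∧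
      Algebra.IsSeparable k (B ⧸ m)}) ↦ (m.map (algebraMap B (Localization.Away (a₀ * d₁)))) ^ s)
      m ⟨hm, hpm, hsep⟩ hy
    rw [← Ideal.map_pow, IsLocalization.mk'_mem_map_algebraMap_iff (.powers (a₀ * d₁))] at h1
    obtain ⟨_, ⟨j, rfl⟩, hj⟩ := h1
    have hrad : (m ^ s).radical = m := by
      rw [Ideal.radical_pow _ (by omega), hm.isPrime.radical]
    have hprim : (m ^ s).IsPrimary := Ideal.isPrimary_of_isMaximal_radical (by rwa [hrad])
    rw [mul_comm] at hj
    refine ((Ideal.isPrimary_iff.mp hprim).2 hj).resolve_right fun h ↦ ham ?_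
    exact hm.isPrime.mem_of_pow_mem j (hrad ▸ h)
  have hbS : ∃ N : ℕ, IsLocalization.mk' S d₁ t ^ N * algebraMap B S b ∈ q ^ s := by
    refine H _ fun n hn hqn hsep hdn ↦ ?_
    obtain ⟨hmax, hmsep⟩ := comap_isMaximal_isSeparable (IsScalarTower.toAlgHom k B S) n
    have := hb _ hmax (hqp.symm.le.trans (Ideal.comap_mono hqn)) hmsep fun h ↦ ?_
    · have h2 := Ideal.mem_map_of_mem (algebraMap B S) this
      rw [Ideal.map_pow] at h2
      exact Ideal.pow_right_mono Ideal.map_comap_le s h2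
    · have h3 : algebraMap B S (a₀ * d₁) ∈ n := h
      rw [map_mul] at h3
      refine (hn.isPrime.mem_or_mem h3).elim (fun h4 ↦ hn.ne_top ?_) fun h4 ↦ hdn ?_
      · exact Ideal.eq_top_of_isUnit_mem _ h4 (IsLocalization.Away.algebraMap_isUnit a₀)
      · rw [IsLocalization.mk'_eq_mul_mk'_one]
        exact Ideal.mul_mem_right _ _ h4
  obtain ⟨N, hN⟩ := hbS
  rw [← IsLocalization.mk'_pow, ← IsLocalization.mk'_one (M := .powers a₀) S b,
    ← IsLocalization.mk'_mul, ← Ideal.map_pow,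
    IsLocalization.mk'_mem_map_algebraMap_iff (.powers a₀)] at hN
  obtain ⟨_, ⟨j, rfl⟩, hj⟩ := hN
  rw [← Ideal.map_pow, IsLocalization.mk'_mem_map_algebraMap_iff (.powers (a₀ * d₁))]
  refine ⟨_, ⟨j + N, rfl⟩, ?_⟩
  have : (a₀ * d₁) ^ (j + N) * b = (d₁ ^ j * a₀ ^ N) * (a₀ ^ j * (d₁ ^ N * b)) := by ring
  exact this ▸ Ideal.mul_mem_left _ _ hj
end

section
/- Let R be a commutative unitary ring, B an R-algebra, 𝔭 a prime ideal of B, and m, s positive integers with m ≤ s. Let σ be an R-algebra automorphism of B with σ(𝔭) = 𝔭 such that σ(b) − b ∈ 𝔭^{s+1} for all b ∈ B. Then for every R-algebra C and every R-algebra homomorphism ψ : B → C[t]/(t^{m+1}) such that ψ(x) lies in the ideal generated by the class of t for every x ∈ 𝔭^{s−m+1}, one has ψ ∘ σ = ψ. -/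
/-!
Everything rests on `ψ (𝔭^{s+1}) = 0`. Write `A = C[t]/(t^{m+1})`, and let `I₀` be the ideal of `A`
generated by the constant terms of the elements of `ψ 𝔭`. Then `ψ 𝔭 ⊆ I₀ + (t)`. Taking constant
terms is a ring homomorphism killing `t`, so the hypothesis on `ψ` gives `I₀^{s-m+1} = 0`, while
`(t)^{m+1} = 0`. Every term `I₀^i (t)^{s+1-i}` of the binomial expansion of `(I₀ + (t))^{s+1}` has
`i ≥ s-m+1` or `s+1-i ≥ m+1`, so it vanishes.
-/

universe u v

/-- If `I ^ a = 0` and `J ^ b = 0` then `(I + J) ^ n = 0` as soon as `a + b ≤ n + 1`. -/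
lemma ideal_sup_pow_eq_bot {A : Type*} [CommRing A] {I J : Ideal A} {a b n : ℕ}
    (hI : I ^ a = ⊥) (hJ : J ^ b = ⊥) (hab : a + b ≤ n + 1) : (I ⊔ J) ^ n = ⊥ := by
  -- The binomial theorem holds in the commutative semiring of ideals, where `+` is `⊔`.
  rw [← Ideal.add_eq_sup, add_pow]
  refine Finset.sum_eq_zero fun i _ => ?_
  rcases le_or_gt a i with h | h
  · rw [pow_eq_zero_of_le h hI]
    simp
  · rw [pow_eq_zero_of_le (show b ≤ n - i by omega) hJ]
    simp

/-- Let `B` be an `R`-algebra, `𝔭` a prime of `B`, `1 ≤ m ≤ s`, and `σ` an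
`R`-algebra automorphism of `B` with `σ(𝔭) = 𝔭` and `σ b − b ∈ 𝔭^{s+1}` for all `b`.  Then for
every `R`-algebra `C` and every `R`-algebra map `ψ : B → C[t]/(t^{m+1})` sending `𝔭^{s−m+1}`
into the ideal generated by the class of `t`, one has `ψ ∘ σ = ψ`. -/
theorem jet_comp_automorphism_eq_self
    (R B : Type u) [CommRing R] [CommRing B] [Algebra R B]
    (p : Ideal B) [p.IsPrime] (m s : ℕ) (hm : 1 ≤ m) (hms : m ≤ s)
    (σ : B ≃ₐ[R] B) (hσp : p.map (σ : B →+* B) = p)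
    (hσ : ∀ b : B, σ b - b ∈ p ^ (s + 1)) :
    ∀ (C : Type v) [CommRing C] [Algebra R C]
      (ψ : B →ₐ[R] Polynomial C ⧸ Ideal.span {(Polynomial.X : Polynomial C) ^ (m + 1)}),
      (∀ x ∈ p ^ (s - m + 1),
        ψ x ∈ Ideal.span {Ideal.Quotient.mk
          (Ideal.span {(Polynomial.X : Polynomial C) ^ (m + 1)}) Polynomial.X}) →
      ψ.comp σ.toAlgHom = ψ := by
  intro C _ _ ψ hψ
  let q := Ideal.Quotient.mk (Ideal.span {(Polynomial.X : Polynomial C) ^ (m + 1)})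
  let T := Ideal.span {q Polynomial.X}
  -- `ε` takes the constant term and `ι` is the inclusion of constants.
  let ε : (Polynomial C ⧸ Ideal.span {(Polynomial.X : Polynomial C) ^ (m + 1)}) →+* C :=
    Ideal.Quotient.lift _ (Polynomial.evalRingHom 0) (by
      intro a ha
      obtain ⟨c, rfl⟩ := Ideal.mem_span_singleton.1 ha
      simp)
  let ι := q.comp Polynomial.C
  have hε : ∀ f, ε (q f) = f.eval 0 := fun f => rfl
  have hsub : ∀ a, a - ι (ε a) ∈ T := by
    intro a
    obtain ⟨f, rfl⟩ := Ideal.Quotient.mk_surjective a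
    change q f - q (Polynomial.C (ε (q f))) ∈ T
    rw [hε, ← map_sub]
    refine Ideal.mem_span_singleton.2 (map_dvd q ?_)
    rw [Polynomial.X_dvd_iff]
    simp [Polynomial.coeff_zero_eq_eval_zero]
  have hTε : T ≤ RingHom.ker ε := by
    rw [Ideal.span_le, Set.singleton_subset_iff]
    change ε (q Polynomial.X) = 0
    rw [hε, Polynomial.eval_X]
  have hT : T ^ (m + 1) = ⊥ := by
    rw [Ideal.span_singleton_pow, Ideal.span_singleton_eq_bot, ← map_pow]
    exact Ideal.Quotient.eq_zero_iff_mem.2 (Ideal.mem_span_singleton_self _)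
  let ψ' : B →+* _ := ψ.toRingHom
  let I₀ := p.map (ι.comp (ε.comp ψ'))
  have hI₀ : I₀ ^ (s - m + 1) = ⊥ := by
    rw [← Ideal.map_pow, Ideal.map_eq_bot_iff_le_ker]
    intro x hx
    have h : ε (ψ' x) = 0 := hTε (hψ x hx)
    change ι (ε (ψ' x)) = 0
    rw [h, map_zero]
  have hle : p.map ψ' ≤ I₀ ⊔ T := by
    rw [Ideal.map_le_iff_le_comap]
    intro x hx
    have h := Ideal.add_mem _
      (Ideal.mem_sup_left (T := T) (Ideal.mem_map_of_mem (ι.comp (ε.comp ψ')) hx))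
      (Ideal.mem_sup_right (hsub (ψ' x)))
    simpa using h
  have hker : ∀ x ∈ p ^ (s + 1), ψ x = 0 := by
    intro x hx
    have h := Ideal.mem_map_of_mem ψ' hx
    rw [Ideal.map_pow] at h
    have h' := Ideal.pow_right_mono hle (s + 1) h
    rw [ideal_sup_pow_eq_bot hI₀ hT (by omega)] at h'
    exact h'
  ext b
  have h := hker _ (hσ b)
  rw [map_sub, sub_eq_zero] at h
  exact h
end

section
/- Let k be a field, B a k-algebra of finite type, and 𝔭 a prime ideal of B such that the residue field k(𝔭) is formally smooth over k (equivalently, separably generated over k). Then Ω¹_{B/k} ⊗_B k(𝔭) is a free k(𝔭)-vector space of dimension d + t, where d = dim_{k(𝔭)}(𝔭B_𝔭/𝔭²B_𝔭) and t is the transcendence degree of k(𝔭) over k. Equivalently, there is a split short exact sequence of k(𝔭)-vector spaces 0 → 𝔭B_𝔭/𝔭²B_𝔭 → Ω¹_{B/k} ⊗_B k(𝔭) → Ω¹_{k(𝔭)/k} → 0 with dim_{k(𝔭)} Ω¹_{k(𝔭)/k} = t. -/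
/-!
Write `A = B_𝔭` and `κ = k(𝔭)`. Since localization is formally étale, `κ ⊗_B Ω_B = κ ⊗_A Ω_A`,
and the conormal sequence `𝔪/𝔪² → κ ⊗_A Ω_A → Ω_κ → 0` of `A → κ` is exact. Formal smoothness of
`κ` over `k` provides a section of `A/𝔪² → κ`, hence a retraction of the first map; so the
dimension of the fiber is `dim 𝔪/𝔪² + dim Ω_κ` (`finrank_tensor_kaehler_residueField`).

It remains to see that `dim Ω_κ` is the transcendence degree of `κ` over `k`
(`exists_isTranscendenceBasis_of_formallySmooth`). Choose `x₁, …, xₙ ∈ κ` whose differentials form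
a basis of `Ω_κ`, and let `P = k[X₁, …, Xₙ]` act on `κ` via `Xᵢ ↦ xᵢ`. Then `κ ⊗_P Ω_P → Ω_κ` is
an isomorphism, so the Jacobi–Zariski sequence of `k → P → κ`, together with `H₁(L_{κ/k}) = 0`,
shows that `κ` is formally étale over `P`.

* `κ` is essentially of finite type and formally smooth over the Noetherian ring `P`, hence flat
  (`flat_of_formallySmooth_of_essFiniteType`), hence torsion-free over the domain `P`. So `P → κ`
  is injective, that is, the `xᵢ` are algebraically independent.
* `κ` is formally unramified and essentially of finite type over the subfield `k(x₁, …, xₙ)`, hence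
  separable algebraic over it.

Thus the `xᵢ` form a transcendence basis, and any two of those have the same cardinality.
-/

universe u

open TensorProduct

/-- The algebra is a quotient of a localization of a polynomial ring, which is flat and Noetherian;
formal smoothness makes it a retract of the adic completion of that localization. -/
lemma flat_of_formallySmooth_of_essFiniteType (R A : Type u) [CommRing R] [CommRing A]
    [Algebra R A] [IsNoetherianRing R] [Algebra.EssFiniteType R A] [Algebra.FormallySmooth R A] :
    Module.Flat R A := by
  obtain ⟨s, hs⟩ := (Algebra.essFiniteType_iff R A).mp inferInstance
  let f : MvPolynomial s R →ₐ[R] A := MvPolynomial.aeval (fun i : s ↦ (i : A))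
  have hf : f.range = Algebra.adjoin R (s : Set A) := by
    rw [Algebra.adjoin_eq_range]; rfl
  let M : Submonoid (MvPolynomial s R) := (IsUnit.submonoid A).comap f
  let g : Localization M →ₐ[R] A :=
    IsLocalization.liftAlgHom (M := M) (f := f) (fun y ↦ y.2)
  have hg (a : MvPolynomial s R) : g (algebraMap _ _ a) = f a :=
    IsLocalization.lift_eq (M := M) (g := f.toRingHom) (fun y ↦ y.2) a
  have : IsNoetherianRing (Localization M) := IsLocalization.isNoetherianRing M _ inferInstance
  have : Module.Flat (MvPolynomial s R) (Localization M) := IsLocalization.flat _ M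
  have : Module.Flat R (Localization M) := .trans R (MvPolynomial s R) _
  refine Algebra.FormallySmooth.flat_of_algHom_of_isNoetherianRing g fun a ↦ ?_
  obtain ⟨t, ht, htu, hat⟩ := hs a
  rw [← hf] at ht hat
  obtain ⟨t', rfl⟩ := ht
  obtain ⟨b, hb⟩ := hat
  refine ⟨IsLocalization.mk' _ b (⟨t', htu⟩ : M), htu.mul_left_injective ?_⟩
  change g (IsLocalization.mk' _ b (⟨t', htu⟩ : M)) * f t' = a * f t'
  rw [← hg t', ← map_mul]
  refine ((congrArg g (IsLocalization.mk'_spec _ b (⟨t', htu⟩ : M))).trans (hg b)).trans ?_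
  rw [hg]
  exact hb

lemma exists_basis_kaehler_D (k K : Type u) [Field k] [Field K] [Algebra k K]
    [Algebra.EssFiniteType k K] :
    ∃ (n : ℕ) (x : Fin n → K) (b : Module.Basis (Fin n) K Ω[K⁄k]),
      ∀ i, b i = KaehlerDifferential.D k K (x i) := by
  obtain ⟨f, hf, hspan, hli⟩ := Submodule.exists_fun_fin_finrank_span_eq K
    (Set.range (KaehlerDifferential.D k K))
  choose x hx using hf
  replace hspan := hspan.trans (KaehlerDifferential.span_range_derivation k K)
  exact ⟨_, x, .mk hli hspan.ge, fun i ↦ by simp [hx]⟩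

lemma exists_isTranscendenceBasis_of_formallySmooth (k K : Type u) [Field k] [Field K]
    [Algebra k K] [Algebra.EssFiniteType k K] [Algebra.FormallySmooth k K] :
    ∃ x : Fin (Module.finrank K Ω[K⁄k]) → K, IsTranscendenceBasis k x := by
  obtain ⟨n, x, b, hb⟩ := exists_basis_kaehler_D k K
  rw [Module.finrank_eq_card_basis b, Fintype.card_fin]
  refine ⟨x, ?_⟩
  let φ : MvPolynomial (Fin n) k →ₐ[k] K := MvPolynomial.aeval x
  algebraize [φ.toRingHom]
  have : IsScalarTower k (MvPolynomial (Fin n) k) K := .of_algebraMap_eq' φ.comp_algebraMap.symm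
  have hX (i) : algebraMap (MvPolynomial (Fin n) k) K (.X i) = x i := MvPolynomial.aeval_X x i
  let b' := (KaehlerDifferential.mvPolynomialBasis k (Fin n)).baseChange K
  have hbij : Function.Bijective
      (KaehlerDifferential.mapBaseChange k (MvPolynomial (Fin n) k) K) := by
    have : KaehlerDifferential.mapBaseChange k (MvPolynomial (Fin n) k) K =
        (b'.equiv b (Equiv.refl _)).toLinearMap := by
      refine b'.ext fun i ↦ ?_
      rw [LinearEquiv.coe_coe, Module.Basis.equiv_apply]
      simp [b', hb, hX]
    rw [this]
    exact (b'.equiv b (Equiv.refl _)).bijective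
  have : Algebra.FormallyEtale (MvPolynomial (Fin n) k) K := by
    refine ⟨⟨fun y z ↦ ?_⟩, ⟨fun y z ↦ ?_⟩⟩
    · suffices ∀ y : Ω[K⁄MvPolynomial (Fin n) k], y = 0 by rw [this y, this z]
      intro y
      obtain ⟨w, rfl⟩ := KaehlerDifferential.map_surjective k (MvPolynomial (Fin n) k) K y
      exact (KaehlerDifferential.exact_mapBaseChange_map k (MvPolynomial (Fin n) k) K w).mpr
        (hbij.2 w)
    · suffices ∀ y : Algebra.H1Cotangent (MvPolynomial (Fin n) k) K, y = 0 by
        rw [this y, this z]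
      intro y
      have h0 : Algebra.H1Cotangent.δ k (MvPolynomial (Fin n) k) K y = 0 :=
        hbij.1 (((Algebra.H1Cotangent.exact_δ_mapBaseChange k _ K _).mpr ⟨y, rfl⟩).trans
          (map_zero _).symm)
      obtain ⟨w, rfl⟩ := (Algebra.H1Cotangent.exact_map_δ k (MvPolynomial (Fin n) k) K y).mp h0
      rw [Subsingleton.elim w 0, map_zero]
  have : Algebra.EssFiniteType (MvPolynomial (Fin n) k) K := .of_comp k _ K
  have : Module.Flat (MvPolynomial (Fin n) k) K := flat_of_formallySmooth_of_essFiniteType _ _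
  have hind : AlgebraicIndependent k x :=
    FaithfulSMul.algebraMap_injective (MvPolynomial (Fin n) k) K
  refine hind.isTranscendenceBasis_iff_isAlgebraic.mpr ?_
  let E := IntermediateField.adjoin k (Set.range x)
  let ψ : MvPolynomial (Fin n) k →ₐ[k] E := MvPolynomial.aeval
    fun i ↦ ⟨x i, IntermediateField.subset_adjoin _ _ ⟨i, rfl⟩⟩
  algebraize [ψ.toRingHom]
  have hψ : (IsScalarTower.toAlgHom k E K).comp ψ = φ := by
    ext i; simp [φ, ψ]
  have : IsScalarTower (MvPolynomial (Fin n) k) E K :=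
    .of_algebraMap_eq fun p ↦ (DFunLike.congr_fun hψ p).symm
  have : Algebra.FormallyUnramified E K := .of_restrictScalars (MvPolynomial (Fin n) k) E K
  have : Algebra.EssFiniteType E K := .of_comp k E K
  have : Algebra.IsSeparable E K := Algebra.FormallyUnramified.isSeparable E K
  exact IntermediateField.isAlgebraic_adjoin_iff_top.mp inferInstance

lemma kerCotangentToTensor_injective_of_formallySmooth (k A K : Type u) [CommRing k] [CommRing A]
    [CommRing K] [Algebra k A] [Algebra k K] [Algebra A K] [IsScalarTower k A K]
    [Algebra.FormallySmooth k K] (hs : Function.Surjective (algebraMap A K)) :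
    Function.Injective (KaehlerDifferential.kerCotangentToTensor k A K) := by
  let q := (IsScalarTower.toAlgHom k A K).kerSquareLift
  have hq : Function.Surjective q := fun y ↦ by
    obtain ⟨a, rfl⟩ := hs y
    exact ⟨Ideal.Quotient.mk _ a, rfl⟩
  have hq' : IsNilpotent (RingHom.ker q) := by
    refine ⟨2, ?_⟩
    change RingHom.ker q.toRingHom ^ 2 = ⊥
    rw [AlgHom.ker_kerSquareLift, Ideal.cotangentIdeal_square]
  let l := (retractionKerCotangentToTensorEquivSection (R := k) hs).symm
    ⟨Algebra.FormallySmooth.liftOfSurjective (AlgHom.id k K) q hq hq',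
      Algebra.FormallySmooth.comp_liftOfSurjective _ _ _ _⟩
  exact Function.LeftInverse.injective (g := l.1) fun y ↦ LinearMap.congr_fun l.2 y

lemma finrank_tensor_kaehler_residueField (k A : Type u) [Field k] [CommRing A] [IsLocalRing A]
    [Algebra k A] [Algebra.EssFiniteType k A]
    [Algebra.FormallySmooth k (IsLocalRing.ResidueField A)] :
    Module.finrank (IsLocalRing.ResidueField A) (IsLocalRing.ResidueField A ⊗[A] Ω[A⁄k]) =
      Module.finrank (IsLocalRing.ResidueField A) (IsLocalRing.CotangentSpace A) +
      Module.finrank (IsLocalRing.ResidueField A) Ω[IsLocalRing.ResidueField A⁄k] := by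
  have hs : Function.Surjective (algebraMap A (IsLocalRing.ResidueField A)) :=
    IsLocalRing.residue_surjective
  have hker : RingHom.ker (algebraMap A (IsLocalRing.ResidueField A)) =
      IsLocalRing.maximalIdeal A := IsLocalRing.ker_residue
  have hinj := kerCotangentToTensor_injective_of_formallySmooth k A (IsLocalRing.ResidueField A) hs
  have hex := KaehlerDifferential.exact_kerCotangentToTensor_mapBaseChange k A
    (IsLocalRing.ResidueField A) hs
  have hsurj := KaehlerDifferential.mapBaseChange_surjective k A (IsLocalRing.ResidueField A) hs
  -- The cotangent space is formed with `maximalIdeal A`, which equals the kernel of the residue map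
  -- only propositionally, so the conormal map has to be transported along `hker`.
  obtain ⟨f, hf⟩ : ∃ f : IsLocalRing.CotangentSpace A →ₗ[A]
      (IsLocalRing.ResidueField A ⊗[A] Ω[A⁄k]), Function.Injective f ∧
      Function.Exact f (KaehlerDifferential.mapBaseChange k A (IsLocalRing.ResidueField A)) := by
    revert hinj hex
    generalize KaehlerDifferential.kerCotangentToTensor k A (IsLocalRing.ResidueField A) = g
    revert g
    rw [hker]
    exact fun g h1 h2 ↦ ⟨g, h1, h2⟩
  let F := LinearMap.extendScalarsOfSurjective hs f
  have hF : LinearMap.range F =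
      LinearMap.ker (KaehlerDifferential.mapBaseChange k A (IsLocalRing.ResidueField A)) := by
    ext x
    exact (hf.2 x).symm
  rw [← LinearMap.finrank_range_add_finrank_ker
    (KaehlerDifferential.mapBaseChange k A (IsLocalRing.ResidueField A)), ← hF,
    LinearMap.range_eq_top.mpr hsurj, finrank_top,
    LinearMap.finrank_range_of_inj (f := F) hf.1, add_comm]

/-- Let `B` be a `k`-algebra of finite type and `𝔭` a prime of `B` with
separably generated (= formally smooth) residue field `κ = k(𝔭)`.  Then
`Ω¹_{B/k} ⊗_B κ` is a free `κ`-vector space of dimension `d + t`, where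
`d = dim_κ (𝔭B_𝔭/𝔭²B_𝔭)` and `t = trdeg_k κ` (the cardinality of any transcendence basis). -/
theorem finrank_kaehler_fiber
    (k B : Type u) [Field k] [CommRing B] [Algebra k B] [Algebra.FiniteType k B]
    (p : Ideal B) [p.IsPrime]
    (hfs : Algebra.FormallySmooth k (IsLocalRing.ResidueField (Localization.AtPrime p))) :
    Module.Free (IsLocalRing.ResidueField (Localization.AtPrime p))
      ((IsLocalRing.ResidueField (Localization.AtPrime p)) ⊗[B] (KaehlerDifferential k B)) ∧
    ∀ (ι : Type) [Fintype ι] (x : ι → IsLocalRing.ResidueField (Localization.AtPrime p)),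
      IsTranscendenceBasis k x →
      Module.finrank (IsLocalRing.ResidueField (Localization.AtPrime p))
          ((IsLocalRing.ResidueField (Localization.AtPrime p)) ⊗[B] (KaehlerDifferential k B)) =
        Module.finrank (IsLocalRing.ResidueField (Localization.AtPrime p))
          (IsLocalRing.CotangentSpace (Localization.AtPrime p)) + Fintype.card ι := by
  refine ⟨inferInstance, fun ι _ x hx ↦ ?_⟩
  have : Algebra.EssFiniteType k (IsLocalRing.ResidueField (Localization.AtPrime p)) :=
    .of_surjective (IsScalarTower.toAlgHom k (Localization.AtPrime p) _)
      IsLocalRing.residue_surjective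
  have : Algebra.FormallyEtale B (Localization.AtPrime p) :=
    .of_isLocalization p.primeCompl
  let e : IsLocalRing.ResidueField (Localization.AtPrime p) ⊗[B] Ω[B⁄k] ≃ₗ[
      IsLocalRing.ResidueField (Localization.AtPrime p)]
      IsLocalRing.ResidueField (Localization.AtPrime p) ⊗[Localization.AtPrime p]
        Ω[Localization.AtPrime p⁄k] :=
    (AlgebraTensorModule.cancelBaseChange B (Localization.AtPrime p) _ _ _).symm.trans
      (AlgebraTensorModule.congr (.refl _ _)
        (KaehlerDifferential.tensorKaehlerEquivOfFormallyEtale k B (Localization.AtPrime p)))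
  obtain ⟨y, hy⟩ := exists_isTranscendenceBasis_of_formallySmooth k
    (IsLocalRing.ResidueField (Localization.AtPrime p))
  have hcard := hx.lift_cardinalMk_eq hy
  rw [e.finrank_eq, finrank_tensor_kaehler_residueField]
  simpa using hcard.symm
end
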